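/- arXiv:2411.02573 — 9 statements merged into one kernel-verified Lean document; each statement's English description precedes it below -/
import Mathlib

section
/- Maximal monotonicity of the circuit operator (key step in the proof of Theorem B.1). Let f: ℝ^m → ℝ be μ-strongly convex and M-smooth (0 < μ ≤ M < ∞), and let B be a real matrix with σ + m columns, the indices {1,…,σ} partitioned into sets ℛ, ℒ, 𝒞. Define the set-valued operator 𝔸: ℝ^{|𝒞|+|ℒ|} ⇉ ℝ^{|𝒞|+|ℒ|} whose graph is { ((v_𝒞, i_ℒ), (−i_𝒞, −v_ℒ)) : there exist v_ℛ, i_ℛ ∈ ℝ^{|ℛ|}, v_ℒ ∈ ℝ^{|ℒ|}, i_𝒞 ∈ ℝ^{|𝒞|}, x, y ∈ ℝ^m such that, with v = (v_ℛ, v_ℒ, v_𝒞) and i = (i_ℛ, i_ℒ, i_𝒞), one has (i; y) ∈ ker B, (v; x) ∈ range Bᵀ, y = ∇f(x), and v_ℛ = i_ℛ }. Then 𝔸 is maximal monotone. -/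
open Matrix

/-- The continuous linear map `h ↦ ⟨g, h⟩` on `ℝ^m` (Euclidean inner product). -/
noncomputable def dotCLM {m : ℕ} (g : Fin m → ℝ) : (Fin m → ℝ) →L[ℝ] ℝ :=
  ∑ k, g k • ContinuousLinearMap.proj k

/-- `g` is the (Euclidean) gradient of `f` everywhere. -/
def HasGradient {m : ℕ} (f : (Fin m → ℝ) → ℝ) (g : (Fin m → ℝ) → Fin m → ℝ) : Prop :=
  ∀ x, HasFDerivAt f (dotCLM (g x)) x

/-- `f` is `μ`-strongly convex: `f − (μ/2)‖·‖²` is convex. -/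
def StronglyConvexFun {m : ℕ} (μ : ℝ) (f : (Fin m → ℝ) → ℝ) : Prop :=
  ConvexOn ℝ Set.univ (fun x => f x - μ / 2 * (x ⬝ᵥ x))

/-- The gradient `g` is `M`-Lipschitz (squared Euclidean form). -/
def GradLipschitz {m : ℕ} (M : ℝ) (g : (Fin m → ℝ) → Fin m → ℝ) : Prop :=
  ∀ x z : Fin m → ℝ, (g x - g z) ⬝ᵥ (g x - g z) ≤ M ^ 2 * ((x - z) ⬝ᵥ (x - z))

/-- A graph `G ⊆ ℝ^ι × ℝ^ι` is monotone. -/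
def MonoGraph {ι : Type*} [Fintype ι] (G : Set ((ι → ℝ) × (ι → ℝ))) : Prop :=
  ∀ q₁ ∈ G, ∀ q₂ ∈ G,
    0 ≤ ∑ l, (q₁.2 l - q₂.2 l) * (q₁.1 l - q₂.1 l)

/-- A graph is maximal monotone: monotone and not properly contained in the
graph of any monotone operator. -/
def MaximalMonoGraph {ι : Type*} [Fintype ι] (G : Set ((ι → ℝ) × (ι → ℝ))) : Prop :=
  MonoGraph G ∧ ∀ G' : Set ((ι → ℝ) × (ι → ℝ)), MonoGraph G' → G ⊆ G' → G' = G

/-!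
By Minty's criterion it suffices that `𝔸` is monotone and that `I + 𝔸` is surjective.
Monotonicity is Tellegen's theorem: differences of admissible `(i; y)` and `(v; x)` lie in the
orthogonal spaces `ker B` and `range Bᵀ`, so the power dissipated by the resistors and by the
monotone map `∇f` is exactly the power supplied at the ports. For surjectivity at `w`, let `c` be
`-w` on the capacitors, `w` on the inductors and `0` on the resistors; it suffices to find
`(v; x) ∈ range Bᵀ` with `(v + c; ∇f x) ∈ ker B`. These are the stationarity conditions of
`‖v + c‖² / 2 + f x` on the subspace `range Bᵀ`, and this function has a minimiser there because
strong convexity makes `f` coercive.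
-/

open Filter Set

section Convex

variable {E : Type*} [NormedAddCommGroup E] [NormedSpace ℝ E] {s : Set E} {f : E → ℝ}
  {f' : E →L[ℝ] ℝ} {x y : E}

lemma hasFDerivAt_apply_sub_le_of_convexOn (hf : ConvexOn ℝ s f) (hx : x ∈ s) (hy : y ∈ s)
    (hf' : HasFDerivAt f f' x) : f' (y - x) ≤ f y - f x := by
  have hline : ConvexOn ℝ (AffineMap.lineMap x y ⁻¹' s) (f ∘ AffineMap.lineMap (k := ℝ) x y) :=
    hf.comp_affineMap _
  have hderiv : HasDerivAt (f ∘ AffineMap.lineMap (k := ℝ) x y) (f' (y - x)) 0 :=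
    HasFDerivAt.comp_hasDerivAt 0 (by simpa using hf') AffineMap.hasDerivAt_lineMap
  simpa [slope_def_field] using
    hline.le_slope_of_hasDerivAt (by simpa using hx) (by simpa using hy) one_pos hderiv

lemma hasFDerivAt_monotone_of_convexOn {g' : E →L[ℝ] ℝ} (hf : ConvexOn ℝ s f) (hx : x ∈ s)
    (hy : y ∈ s) (hf' : HasFDerivAt f f' x) (hg' : HasFDerivAt f g' y) :
    g' (x - y) ≤ f' (x - y) := by
  have hxy := hasFDerivAt_apply_sub_le_of_convexOn hf hx hy hf'
  have hyx := hasFDerivAt_apply_sub_le_of_convexOn hf hy hx hg'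
  rw [← neg_sub x y, map_neg] at hxy
  linarith

end Convex

lemma tendsto_add_cocompact_prod {X Y : Type*} [TopologicalSpace X] [TopologicalSpace Y]
    [Nonempty X] [Nonempty Y] {a : X → ℝ} {b : Y → ℝ} (ha : Continuous a) (hb : Continuous b)
    (ha_top : Tendsto a (cocompact X) atTop) (hb_top : Tendsto b (cocompact Y) atTop) :
    Tendsto (fun p : X × Y => a p.1 + b p.2) (cocompact (X × Y)) atTop := by
  obtain ⟨x₀, hx₀⟩ := ha.exists_forall_le ha_top
  obtain ⟨y₀, hy₀⟩ := hb.exists_forall_le hb_top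
  rw [← coprod_cocompact]
  exact tendsto_sup.2
    ⟨tendsto_atTop_add_right_of_le _ _ (ha_top.comp tendsto_comap) fun p => hy₀ p.2,
      tendsto_atTop_add_left_of_le _ _ (fun p => hx₀ p.1) (hb_top.comp tendsto_comap)⟩

lemma exists_mem_submodule_forall_hasFDerivAt_apply_eq_zero {E : Type*} [NormedAddCommGroup E]
    [NormedSpace ℝ E] {F : E → ℝ} {F' : E → E →L[ℝ] ℝ} (hF : ∀ u, HasFDerivAt F (F' u) u)
    (hF_top : Tendsto F (cocompact E) atTop) (S : Submodule ℝ E) (hS : IsClosed (S : Set E)) :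
    ∃ u ∈ S, ∀ h ∈ S, F' u h = 0 := by
  have hcont : Continuous F := continuous_iff_continuousAt.2 fun u => (hF u).continuousAt
  obtain ⟨u, hu, hmin⟩ := hcont.continuousOn.exists_isMinOn' hS S.zero_mem
    ((hF_top.mono_left inf_le_left).eventually_ge_atTop (F 0))
  have hcone : ∀ h ∈ S, h ∈ posTangentConeAt (S : Set E) u := fun h hh =>
    mem_posTangentConeAt_of_segment_subset (S.convex.segment_subset hu (S.add_mem hu hh))
  exact ⟨u, hu, fun h hh => hmin.localize.hasFDerivWithinAt_eq_zero (hF u).hasFDerivWithinAt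
    (hcone h hh) (hcone (-h) (S.neg_mem hh))⟩

section DotProduct

variable {ι κ : Type*} [Fintype ι] [Fintype κ]

lemma dotProduct_self_nonneg {R : Type*} [Ring R] [LinearOrder R] [IsStrictOrderedRing R]
    (x : ι → R) : 0 ≤ x ⬝ᵥ x :=
  Finset.sum_nonneg fun j _ => mul_self_nonneg (x j)

lemma norm_sq_le_dotProduct_self (x : ι → ℝ) : ‖x‖ ^ 2 ≤ x ⬝ᵥ x := by
  have hcoord (j : ι) : x j ^ 2 ≤ x ⬝ᵥ x := by
    rw [sq]
    exact Finset.single_le_sum (fun k _ => mul_self_nonneg (x k)) (Finset.mem_univ j)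
  refine (Real.le_sqrt (norm_nonneg x) (dotProduct_self_nonneg x)).1 ?_
  exact (pi_norm_le_iff_of_nonneg (Real.sqrt_nonneg _)).2 fun j => Real.abs_le_sqrt (hcoord j)

lemma convexOn_dotProduct_self : ConvexOn ℝ univ fun x : ι → ℝ => x ⬝ᵥ x := by
  refine ⟨convex_univ, fun x _ y _ a b ha hb hab => ?_⟩
  have hgap : a * (x ⬝ᵥ x) + b * (y ⬝ᵥ y) - (a • x + b • y) ⬝ᵥ (a • x + b • y) =
      a * b * ((x - y) ⬝ᵥ (x - y)) := by
    obtain rfl : b = 1 - a := by linarith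
    simp only [add_dotProduct, dotProduct_add, sub_dotProduct, dotProduct_sub, smul_dotProduct,
      dotProduct_smul, smul_eq_mul, dotProduct_comm y x]
    ring
  have := mul_nonneg (mul_nonneg ha hb) (dotProduct_self_nonneg (x - y))
  simp only [smul_eq_mul]
  linarith

lemma hasFDerivAt_half_dotProduct_self (x : ι → ℝ) :
    HasFDerivAt (fun x : ι → ℝ => x ⬝ᵥ x / 2)
      (LinearMap.toContinuousLinearMap (dotProductBilin ℝ ℝ x)) x := by
  have hsq (j : ι) := (hasFDerivAt_apply (𝕜 := ℝ) j x).mul (hasFDerivAt_apply j x)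
  have hsum := (HasFDerivAt.fun_sum fun j (_ : j ∈ Finset.univ) => hsq j).mul_const (2⁻¹ : ℝ)
  refine hsum.congr_fderiv (ContinuousLinearMap.ext fun h => ?_)
  simp only [_root_.smul_apply, _root_.sum_apply, _root_.add_apply, ContinuousLinearMap.proj_apply,
    smul_eq_mul, Finset.mul_sum, LinearMap.coe_toContinuousLinearMap', dotProductBilin_apply_apply,
    dotProduct]
  exact Finset.sum_congr rfl fun j _ => by ring

lemma tendsto_linear_add_dotProduct_self_cocompact (L : (ι → ℝ) →L[ℝ] ℝ) {a : ℝ} (ha : 0 < a) :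
    Tendsto (fun x : ι → ℝ => L x + a * (x ⬝ᵥ x)) (cocompact (ι → ℝ)) atTop := by
  have hbound (x : ι → ℝ) : ‖x‖ * (a * ‖x‖ - ‖L‖) ≤ L x + a * (x ⬝ᵥ x) := by
    have hL : -(‖L‖ * ‖x‖) ≤ L x := (abs_le.1 (L.le_opNorm x)).1
    have hx := mul_le_mul_of_nonneg_left (norm_sq_le_dotProduct_self x) ha.le
    linarith
  have hpoly : Tendsto (fun r : ℝ => r * (a * r - ‖L‖)) atTop atTop :=
    tendsto_id.atTop_mul_atTop₀ (tendsto_atTop_add_const_right _ _ (tendsto_id.const_mul_atTop ha))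
  exact tendsto_atTop_mono hbound (hpoly.comp tendsto_norm_cocompact_atTop)

lemma mulVec_eq_zero_iff_forall_dotProduct_transpose_mulVec {R : Type*} [CommSemiring R]
    (B : Matrix κ ι R) (u : ι → R) : B *ᵥ u = 0 ↔ ∀ z, u ⬝ᵥ (Bᵀ *ᵥ z) = 0 := by
  simp only [dotProduct_mulVec, vecMul_transpose, dotProduct_eq_zero_iff]

lemma tellegen {R σ : Type*} [CommSemiring R] [Fintype σ] {B : Matrix κ (σ ⊕ ι) R}
    {i v : σ → R} {y x : ι → R} {z : κ → R} (hker : B *ᵥ Sum.elim i y = 0)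
    (hrange : Sum.elim v x = Bᵀ *ᵥ z) : i ⬝ᵥ v + y ⬝ᵥ x = 0 := by
  rw [← sumElim_dotProduct_sumElim, hrange]
  exact (mulVec_eq_zero_iff_forall_dotProduct_transpose_mulVec B _).1 hker z

end DotProduct

section Gradient

variable {m : ℕ} {f : (Fin m → ℝ) → ℝ} {g : (Fin m → ℝ) → Fin m → ℝ}

lemma dotCLM_apply (g h : Fin m → ℝ) : dotCLM g h = g ⬝ᵥ h := by
  simp [dotCLM, dotProduct]

lemma HasGradient.differentiable (hg : HasGradient f g) : Differentiable ℝ f :=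
  fun x => (hg x).differentiableAt

lemma HasGradient.monotone_of_convexOn (hg : HasGradient f g) (hf : ConvexOn ℝ univ f)
    (x y : Fin m → ℝ) : 0 ≤ (g x - g y) ⬝ᵥ (x - y) := by
  simpa only [dotCLM_apply, sub_dotProduct, sub_nonneg] using
    hasFDerivAt_monotone_of_convexOn hf (mem_univ x) (mem_univ y) (hg x) (hg y)

lemma StronglyConvexFun.convexOn {μ : ℝ} (hμ : 0 ≤ μ) (hf : StronglyConvexFun μ f) :
    ConvexOn ℝ univ f := by
  have hsum := ConvexOn.add hf (convexOn_dotProduct_self.smul (div_nonneg hμ zero_le_two))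
  simpa [Pi.add_def] using hsum

lemma StronglyConvexFun.tendsto_cocompact_atTop {μ : ℝ} (hμ : 0 < μ)
    (hf : StronglyConvexFun μ f) (hdiff : DifferentiableAt ℝ f 0) :
    Tendsto f (cocompact (Fin m → ℝ)) atTop := by
  let h : (Fin m → ℝ) → ℝ := fun x => f x - μ / 2 * (x ⬝ᵥ x)
  have hh : DifferentiableAt ℝ h 0 := by
    unfold h dotProduct
    fun_prop
  have hbound (x : Fin m → ℝ) : fderiv ℝ h 0 x + μ / 2 * (x ⬝ᵥ x) + f 0 ≤ f x := by
    have htangent :=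
      hasFDerivAt_apply_sub_le_of_convexOn hf (mem_univ 0) (mem_univ x) hh.hasFDerivAt
    simp only [sub_zero, dotProduct_zero, mul_zero, h] at htangent
    linarith
  exact tendsto_atTop_mono hbound <| tendsto_atTop_add_const_right _ _ <|
    tendsto_linear_add_dotProduct_self_cocompact _ (half_pos hμ)

end Gradient

lemma MonoGraph.maximalMonoGraph_of_surjective {ι : Type*} [Fintype ι]
    {G : Set ((ι → ℝ) × (ι → ℝ))} (hG : MonoGraph G) (hsurj : ∀ w, ∃ q ∈ G, q.1 + q.2 = w) :
    MaximalMonoGraph G := by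
  refine ⟨hG, fun G' hG' hsub => hsub.antisymm' fun p hp => ?_⟩
  obtain ⟨q, hq, hqp⟩ := hsurj (p.1 + p.2)
  have hsnd : p.2 - q.2 = -(p.1 - q.1) := by linear_combination -hqp
  have hmono : 0 ≤ (p.2 - q.2) ⬝ᵥ (p.1 - q.1) := hG' p hp q (hsub hq)
  rw [hsnd, neg_dotProduct, neg_nonneg] at hmono
  have hfst : p.1 - q.1 = 0 :=
    dotProduct_self_eq_zero.1 (hmono.antisymm (dotProduct_self_nonneg _))
  have hpq : p = q :=
    Prod.ext (sub_eq_zero.1 hfst) (sub_eq_zero.1 (by rw [hsnd, hfst, neg_zero]))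
  exact hpq ▸ hq

section Circuit

variable {σ ι κ : Type*} [Fintype σ] [Fintype ι] [Fintype κ]

/-- The graph of the circuit operator `𝔸`, for an arbitrary map `g` in place of `∇f`. The input
is `(v_𝒞, i_ℒ)` and the output is `(-i_𝒞, -v_ℒ)`. -/
def circuitOperator (B : Matrix κ (σ ⊕ ι) ℝ) (g : (ι → ℝ) → ι → ℝ) (R L C : Finset σ) :
    Set (({j // j ∈ C} ⊕ {j // j ∈ L} → ℝ) × ({j // j ∈ C} ⊕ {j // j ∈ L} → ℝ)) :=
  {q | ∃ (v i : σ → ℝ) (x y : ι → ℝ),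
    (∀ j : {j // j ∈ C}, q.1 (Sum.inl j) = v j ∧ q.2 (Sum.inl j) = -i j) ∧
    (∀ j : {j // j ∈ L}, q.1 (Sum.inr j) = i j ∧ q.2 (Sum.inr j) = -v j) ∧
    B *ᵥ Sum.elim i y = 0 ∧ (∃ z, Sum.elim v x = Bᵀ *ᵥ z) ∧ y = g x ∧ ∀ j ∈ R, v j = i j}

/-- The pair `((v_𝒞, i_ℒ), (-i_𝒞, -v_ℒ))` that the circuit operator reads off from branch voltages
`v` and branch currents `i`. -/
def circuitPorts {σ : Type*} (L C : Finset σ) (v i : σ → ℝ) :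
    ({j // j ∈ C} ⊕ {j // j ∈ L} → ℝ) × ({j // j ∈ C} ⊕ {j // j ∈ L} → ℝ) :=
  (Sum.elim (fun j => v j) fun j => i j, Sum.elim (fun j => -i j) fun j => -v j)

variable {B : Matrix κ (σ ⊕ ι) ℝ} {g : (ι → ℝ) → ι → ℝ} {R L C : Finset σ}

lemma mem_circuitOperator_iff {q : ({j // j ∈ C} ⊕ {j // j ∈ L} → ℝ) × _} :
    q ∈ circuitOperator B g R L C ↔ ∃ (v i : σ → ℝ) (x : ι → ℝ), q = circuitPorts L C v i ∧
      B *ᵥ Sum.elim i (g x) = 0 ∧ (∃ z, Sum.elim v x = Bᵀ *ᵥ z) ∧ ∀ j ∈ R, v j = i j := by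
  constructor
  · rintro ⟨v, i, x, _, hC, hL, hker, hrange, rfl, hR⟩
    refine ⟨v, i, x, Prod.ext ?_ ?_, hker, hrange, hR⟩
    · exact (Sum.elim_comp_inl_inr q.1).symm.trans
        (congrArg₂ Sum.elim (funext fun j => (hC j).1) (funext fun j => (hL j).1))
    · exact (Sum.elim_comp_inl_inr q.2).symm.trans
        (congrArg₂ Sum.elim (funext fun j => (hC j).2) (funext fun j => (hL j).2))
  · rintro ⟨v, i, x, rfl, hker, hrange, hR⟩
    exact ⟨v, i, x, g x, fun _ => ⟨rfl, rfl⟩, fun _ => ⟨rfl, rfl⟩, hker, hrange, rfl, hR⟩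

lemma circuitPorts_sub {σ : Type*} (L C : Finset σ) (v v' i i' : σ → ℝ) :
    circuitPorts L C v i - circuitPorts L C v' i' = circuitPorts L C (v - v') (i - i') := by
  ext (j | j) <;> simp [circuitPorts] <;> ring

lemma circuitPorts_dotProduct {σ : Type*} (L C : Finset σ) (v i : σ → ℝ) :
    (circuitPorts L C v i).2 ⬝ᵥ (circuitPorts L C v i).1 =
      -(∑ j ∈ C, v j * i j + ∑ j ∈ L, v j * i j) := by
  rw [← Finset.sum_coe_sort C, ← Finset.sum_coe_sort L, circuitPorts, sumElim_dotProduct_sumElim,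
    neg_add, ← Finset.sum_neg_distrib, ← Finset.sum_neg_distrib]
  simp only [dotProduct, mul_neg, mul_comm]

lemma circuitOperator_monoGraph [DecidableEq σ] (hg : ∀ x x', 0 ≤ (g x - g x') ⬝ᵥ (x - x'))
    (hRL : Disjoint R L) (hRC : Disjoint R C) (hLC : Disjoint L C)
    (hcover : R ∪ L ∪ C = Finset.univ) : MonoGraph (circuitOperator B g R L C) := by
  intro q hq q' hq'
  obtain ⟨v, i, x, rfl, hker, ⟨z, hz⟩, hR⟩ := mem_circuitOperator_iff.1 hq
  obtain ⟨v', i', x', rfl, hker', ⟨z', hz'⟩, hR'⟩ := mem_circuitOperator_iff.1 hq'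
  have hpower : (i - i') ⬝ᵥ (v - v') + (g x - g x') ⬝ᵥ (x - x') = 0 :=
    tellegen (B := B) (z := z - z')
      (by rw [Sum.elim_sub_sub, mulVec_sub, hker, hker', sub_zero])
      (by rw [Sum.elim_sub_sub, hz, hz', mulVec_sub])
  have hsplit : (i - i') ⬝ᵥ (v - v') = ∑ j ∈ R, (v - v') j * (i - i') j +
      ∑ j ∈ L, (v - v') j * (i - i') j + ∑ j ∈ C, (v - v') j * (i - i') j := by
    rw [← Finset.sum_union hRL, ← Finset.sum_union (Finset.disjoint_union_left.2 ⟨hRC, hLC⟩),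
      hcover, dotProduct_comm, dotProduct]
  have hresistors : 0 ≤ ∑ j ∈ R, (v - v') j * (i - i') j := by
    refine Finset.sum_nonneg fun j hj => ?_
    simp only [Pi.sub_apply, hR j hj, hR' j hj]
    exact mul_self_nonneg _
  change 0 ≤ (circuitPorts L C v i - circuitPorts L C v' i').2 ⬝ᵥ
    (circuitPorts L C v i - circuitPorts L C v' i').1
  rw [circuitPorts_sub, circuitPorts_dotProduct]
  linarith [hg x x']

lemma exists_source_vector {σ : Type*} {R L C : Finset σ} (hRL : Disjoint R L) (hRC : Disjoint R C)
    (hLC : Disjoint L C) (w : {j // j ∈ C} ⊕ {j // j ∈ L} → ℝ) :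
    ∃ c : σ → ℝ, (∀ j ∈ R, c j = 0) ∧ (∀ j : {j // j ∈ C}, c j = -w (Sum.inl j)) ∧
      ∀ j : {j // j ∈ L}, c j = w (Sum.inr j) := by
  classical
  refine ⟨fun j => if hC : j ∈ C then -w (Sum.inl ⟨j, hC⟩)
    else if hL : j ∈ L then w (Sum.inr ⟨j, hL⟩) else 0, fun j hj => ?_, fun j => ?_, fun j => ?_⟩
  · simp only [dif_neg (Finset.disjoint_left.1 hRC hj), dif_neg (Finset.disjoint_left.1 hRL hj)]
  · simp only [dif_pos j.2]
  · simp only [dif_neg (Finset.disjoint_left.1 hLC j.2), dif_pos j.2]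

lemma circuitOperator_add_surjective (hRL : Disjoint R L) (hRC : Disjoint R C)
    (hLC : Disjoint L C)
    (hsolve : ∀ c : σ → ℝ, ∃ (v : σ → ℝ) (x : ι → ℝ), (∃ z, Sum.elim v x = Bᵀ *ᵥ z) ∧
      B *ᵥ Sum.elim (v + c) (g x) = 0) (w : {j // j ∈ C} ⊕ {j // j ∈ L} → ℝ) :
    ∃ q ∈ circuitOperator B g R L C, q.1 + q.2 = w := by
  obtain ⟨c, hcR, hcC, hcL⟩ := exists_source_vector hRL hRC hLC w
  obtain ⟨v, x, hrange, hker⟩ := hsolve c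
  refine ⟨circuitPorts L C v (v + c), mem_circuitOperator_iff.2
    ⟨v, v + c, x, rfl, hker, hrange, fun j hj => by simp [hcR j hj]⟩, ?_⟩
  ext (j | j) <;> simp [circuitPorts, hcC, hcL]

end Circuit

lemma exists_mem_range_transpose_mulVec_eq_zero {σ κ : Type*} [Fintype σ] [Fintype κ] {m : ℕ}
    {f : (Fin m → ℝ) → ℝ} {g : (Fin m → ℝ) → Fin m → ℝ} (hg : HasGradient f g)
    (hf_top : Tendsto f (cocompact (Fin m → ℝ)) atTop) (B : Matrix κ (σ ⊕ Fin m) ℝ) (c : σ → ℝ) :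
    ∃ (v : σ → ℝ) (x : Fin m → ℝ), (∃ z, Sum.elim v x = Bᵀ *ᵥ z) ∧
      B *ᵥ Sum.elim (v + c) (g x) = 0 := by
  let split := LinearEquiv.sumArrowLequivProdArrow σ (Fin m) ℝ ℝ
  let S : Submodule ℝ ((σ → ℝ) × (Fin m → ℝ)) := Bᵀ.mulVecLin.range.map split.toLinearMap
  have hquad_top : Tendsto (fun v : σ → ℝ => (v + c) ⬝ᵥ (v + c) / 2) (cocompact _) atTop := by
    simpa [Function.comp_def, div_eq_inv_mul] using
      (tendsto_linear_add_dotProduct_self_cocompact 0 one_half_pos).comp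
        (Homeomorph.addRight c).isClosedEmbedding.tendsto_cocompact
  have hquad (v : σ → ℝ) :=
    (hasFDerivAt_comp_add_right c).2 (hasFDerivAt_half_dotProduct_self (v + c))
  have henergy (p : (σ → ℝ) × (Fin m → ℝ)) :=
    ((hquad p.1).comp p hasFDerivAt_fst).add ((hg p.2).comp p hasFDerivAt_snd)
  obtain ⟨_, ⟨_, ⟨z, rfl⟩, rfl⟩, hstat⟩ :=
    exists_mem_submodule_forall_hasFDerivAt_apply_eq_zero henergy
      (tendsto_add_cocompact_prod (by unfold dotProduct; fun_prop) hg.differentiable.continuous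
        hquad_top hf_top) S S.closed_of_finiteDimensional
  refine ⟨(split (Bᵀ *ᵥ z)).1, (split (Bᵀ *ᵥ z)).2, ⟨z, split.symm_apply_apply _⟩, ?_⟩
  refine (mulVec_eq_zero_iff_forall_dotProduct_transpose_mulVec B _).2 fun z' => ?_
  have horth := hstat (split (Bᵀ *ᵥ z')) ⟨_, ⟨z', rfl⟩, rfl⟩
  rw [← Sum.elim_comp_inl_inr (Bᵀ *ᵥ z'), sumElim_dotProduct_sumElim, ← dotCLM_apply]
  exact horth

theorem circuit_operator_maximal_monotone_general {σ κ : Type*} [Fintype σ] [DecidableEq σ]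
    [Fintype κ] {m : ℕ} {f : (Fin m → ℝ) → ℝ} {g : (Fin m → ℝ) → Fin m → ℝ}
    (hgrad : HasGradient f g) (hf : ConvexOn ℝ univ f)
    (hf_top : Tendsto f (cocompact (Fin m → ℝ)) atTop) (B : Matrix κ (σ ⊕ Fin m) ℝ)
    {R L C : Finset σ} (hRL : Disjoint R L) (hRC : Disjoint R C) (hLC : Disjoint L C)
    (hcover : R ∪ L ∪ C = Finset.univ) : MaximalMonoGraph (circuitOperator B g R L C) :=
  (circuitOperator_monoGraph (hgrad.monotone_of_convexOn hf) hRL hRC hLC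
    hcover).maximalMonoGraph_of_surjective <|
      circuitOperator_add_surjective hRL hRC hLC <|
        exists_mem_range_transpose_mulVec_eq_zero hgrad hf_top B

/-- **Maximal monotonicity of the circuit operator
(key step in the proof of Theorem B.1).**  The operator `𝔸` on
`ℝ^{|𝒞|+|ℒ|}` whose graph consists of the pairs `((v_𝒞, i_ℒ), (−i_𝒞, −v_ℒ))`
arising from states satisfying `(i; y) ∈ ker B`, `(v; x) ∈ range Bᵀ`,
`y = ∇f(x)`, `v_ℛ = i_ℛ` is maximal monotone. -/
theorem circuit_operator_maximal_monotone {m σ k : ℕ} (μ M : ℝ)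
    (hμ : 0 < μ) (hμM : μ ≤ M)
    (f : (Fin m → ℝ) → ℝ) (g : (Fin m → ℝ) → Fin m → ℝ)
    (hgrad : HasGradient f g)
    (hsc : StronglyConvexFun μ f) (hsm : GradLipschitz M g)
    (B : Matrix (Fin k) (Fin σ ⊕ Fin m) ℝ)
    (Rset Lset Cset : Finset (Fin σ))
    (hRL : Disjoint Rset Lset) (hRC : Disjoint Rset Cset) (hLC : Disjoint Lset Cset)
    (hcover : Rset ∪ Lset ∪ Cset = Finset.univ) :
    MaximalMonoGraph
      {q : (({j : Fin σ // j ∈ Cset} ⊕ {j : Fin σ // j ∈ Lset}) → ℝ) ×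
           (({j : Fin σ // j ∈ Cset} ⊕ {j : Fin σ // j ∈ Lset}) → ℝ) |
        ∃ (v i : Fin σ → ℝ) (x y : Fin m → ℝ),
          (∀ jc : {j : Fin σ // j ∈ Cset},
            q.1 (Sum.inl jc) = v jc.1 ∧ q.2 (Sum.inl jc) = -(i jc.1)) ∧
          (∀ jl : {j : Fin σ // j ∈ Lset},
            q.1 (Sum.inr jl) = i jl.1 ∧ q.2 (Sum.inr jl) = -(v jl.1)) ∧
          B.mulVec (Sum.elim i y) = 0 ∧
          (∃ z : Fin k → ℝ, Sum.elim v x = B.transpose.mulVec z) ∧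
          y = g x ∧
          (∀ j ∈ Rset, v j = i j)} :=
  circuit_operator_maximal_monotone_general hgrad (hsc.convexOn hμ.le)
    (hsc.tendsto_cocompact_atTop hμ (hgrad.differentiable 0)) B hRL hRC hLC hcover
end

section
/- Equilibrium currents and voltages on resistors vanish (Lemma C.1). Let A ∈ ℝ^{(τ−1)×σ} (τ ≥ m+1), {1,…,σ} partitioned into ℛ, ℒ, 𝒞, and D_ℛ, D_ℒ, D_𝒞 diagonal matrices with strictly positive diagonal entries, and assume the dynamic interconnect is admissible with respect to a selection matrix E ∈ ℝ^{n×m}. Then for every (x, y) ∈ ℝ^m × ℝ^m and every (v, i) ∈ D_{x,y}, one has v_ℛ = 0 and i_ℛ = 0. -/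
open Matrix

/-- Membership `(v, i) ∈ D_{x,y}`: there is an internal-node potential `e` with
`A i = (−y; 0)` (KCL), `v = Aᵀ(x; e)` (KVL), `v_ℛ = D_ℛ i_ℛ`, `v_ℒ = 0`, `i_𝒞 = 0`.
Nodes are indexed by `Fin m ⊕ Fin p` (terminals and internal nodes, ground removed). -/
def MemDxy {m p σ : ℕ} (A : Matrix (Fin m ⊕ Fin p) (Fin σ) ℝ)
    (Rset Lset Cset : Finset (Fin σ)) (dR : Fin σ → ℝ)
    (x y : Fin m → ℝ) (v i : Fin σ → ℝ) : Prop :=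
  (∃ e : Fin p → ℝ,
      A.mulVec i = Sum.elim (fun a => -(y a)) (fun _ => (0 : ℝ)) ∧
      v = A.transpose.mulVec (Sum.elim x e)) ∧
  (∀ j ∈ Rset, v j = dR j * i j) ∧
  (∀ j ∈ Lset, v j = 0) ∧
  (∀ j ∈ Cset, i j = 0)

/-- `E` is a selection matrix: for some assignment of each terminal `j` to a net
`netOf j` (every net nonempty), `E i j = 1` if `j ∈ N_i` and `0` otherwise. -/
def IsSelectionMatrix {n m : ℕ} (E : Matrix (Fin n) (Fin m) ℝ) : Prop :=
  ∃ netOf : Fin m → Fin n, Function.Surjective netOf ∧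
    ∀ i j, E i j = if netOf j = i then 1 else 0

/-- Admissibility of the dynamic interconnect with respect to `E`:
`{(x,y) : ∃ (v,i) ∈ D_{x,y}} = ℛ(Eᵀ) × 𝒩(E)`. -/
def AdmissibleInterconnect {m p σ n : ℕ} (A : Matrix (Fin m ⊕ Fin p) (Fin σ) ℝ)
    (Rset Lset Cset : Finset (Fin σ)) (dR : Fin σ → ℝ)
    (E : Matrix (Fin n) (Fin m) ℝ) : Prop :=
  ∀ x y : Fin m → ℝ,
    (∃ v i : Fin σ → ℝ, MemDxy A Rset Lset Cset dR x y v i) ↔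
      ((∃ z : Fin n → ℝ, x = E.transpose.mulVec z) ∧ E.mulVec y = 0)

/-!
Terminal potentials in `ℛ(Eᵀ)` are orthogonal to terminal currents in `𝒩(E)`, so an admissible
interconnect exchanges no power with its terminals. By Tellegen's theorem that power is the sum
of the branch powers `v_j i_j`; inductors and capacitors contribute nothing at equilibrium, which
leaves the dissipation `i_ℛᵀ D_ℛ i_ℛ`. As `D_ℛ` is positive definite, `i_ℛ = 0` and hence `v_ℛ = 0`.
-/

section

variable {m p σ n : ℕ} {A : Matrix (Fin m ⊕ Fin p) (Fin σ) ℝ} {Rset Lset Cset : Finset (Fin σ)}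
  {dR : Fin σ → ℝ} {x y : Fin m → ℝ} {v i : Fin σ → ℝ}

lemma AdmissibleInterconnect.terminal_dotProduct_eq_zero {E : Matrix (Fin n) (Fin m) ℝ}
    (hadm : AdmissibleInterconnect A Rset Lset Cset dR E)
    (h : MemDxy A Rset Lset Cset dR x y v i) : x ⬝ᵥ y = 0 := by
  obtain ⟨⟨z, rfl⟩, hy⟩ := (hadm x y).1 ⟨v, i, h⟩
  rw [dotProduct_comm, dotProduct_transpose_mulVec, hy, dotProduct_zero]

namespace MemDxy

lemma branch_dotProduct_eq_neg_terminal_dotProduct (h : MemDxy A Rset Lset Cset dR x y v i) :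
    i ⬝ᵥ v = -(x ⬝ᵥ y) := by
  obtain ⟨⟨e, kcl, kvl⟩, -⟩ := h
  calc i ⬝ᵥ v = Sum.elim x e ⬝ᵥ A *ᵥ i := by rw [kvl, dotProduct_transpose_mulVec]
    _ = x ⬝ᵥ (-y) + e ⬝ᵥ 0 := by rw [kcl]; exact sumElim_dotProduct_sumElim ..
    _ = -(x ⬝ᵥ y) := by rw [dotProduct_neg, dotProduct_zero, add_zero]

lemma branch_dotProduct_eq_sum_resistors (hcover : Rset ∪ Lset ∪ Cset = Finset.univ)
    (h : MemDxy A Rset Lset Cset dR x y v i) :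
    i ⬝ᵥ v = ∑ j ∈ Rset, dR j * i j ^ 2 := by
  obtain ⟨-, hR, hL, hC⟩ := h
  have lossless : ∀ j ∉ Rset, i j * v j = 0 := by
    intro j hjR
    have hj : j ∈ Rset ∪ Lset ∪ Cset := hcover ▸ Finset.mem_univ j
    rw [Finset.union_assoc, Finset.mem_union, Finset.mem_union] at hj
    rcases hj.resolve_left hjR with hjL | hjC
    · rw [hL j hjL, mul_zero]
    · rw [hC j hjC, zero_mul]
  calc i ⬝ᵥ v = ∑ j ∈ Rset, i j * v j :=
        (Finset.sum_subset (Finset.subset_univ _) fun j _ ↦ lossless j).symm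
    _ = ∑ j ∈ Rset, dR j * i j ^ 2 :=
        Finset.sum_congr rfl fun j hj ↦ by rw [hR j hj]; ring

end MemDxy

/-- The terminals feed the power `-(x ⬝ᵥ y)` into the branches: `hxy` says that they supply none. -/
theorem equilibrium_resistors_vanish_general (hcover : Rset ∪ Lset ∪ Cset = Finset.univ)
    (hdR : ∀ j ∈ Rset, 0 < dR j) (h : MemDxy A Rset Lset Cset dR x y v i) (hxy : 0 ≤ x ⬝ᵥ y) :
    (∀ j ∈ Rset, v j = 0) ∧ (∀ j ∈ Rset, i j = 0) := by
  have dissipation_nonneg : ∀ j ∈ Rset, 0 ≤ dR j * i j ^ 2 :=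
    fun j hj ↦ mul_nonneg (hdR j hj).le (sq_nonneg _)
  have dissipation_sum : ∑ j ∈ Rset, dR j * i j ^ 2 = 0 := by
    refine le_antisymm ?_ (Finset.sum_nonneg dissipation_nonneg)
    rw [← h.branch_dotProduct_eq_sum_resistors hcover,
      h.branch_dotProduct_eq_neg_terminal_dotProduct]
    exact neg_nonpos.2 hxy
  have current_eq_zero : ∀ j ∈ Rset, i j = 0 := fun j hj ↦
    have dissipation_eq_zero : dR j * i j ^ 2 = 0 :=
      (Finset.sum_eq_zero_iff_of_nonneg dissipation_nonneg).1 dissipation_sum j hj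
    sq_eq_zero_iff.1 ((mul_eq_zero_iff_left (hdR j hj).ne').1 dissipation_eq_zero)
  obtain ⟨-, ohm, -⟩ := h
  exact ⟨fun j hj ↦ by rw [ohm j hj, current_eq_zero j hj, mul_zero], current_eq_zero⟩

end

/-- **Equilibrium currents and voltages on resistors vanish (Lemma C.1).**
If the dynamic interconnect is admissible with respect to a selection matrix `E`,
then for every `(x, y)` and every `(v, i) ∈ D_{x,y}` one has `v_ℛ = 0` and `i_ℛ = 0`. -/
theorem equilibrium_resistors_vanish {m p σ n : ℕ}
    (A : Matrix (Fin m ⊕ Fin p) (Fin σ) ℝ)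
    (Rset Lset Cset : Finset (Fin σ))
    (hRL : Disjoint Rset Lset) (hRC : Disjoint Rset Cset) (hLC : Disjoint Lset Cset)
    (hcover : Rset ∪ Lset ∪ Cset = Finset.univ)
    (dR dL dC : Fin σ → ℝ)
    (hdR : ∀ j ∈ Rset, 0 < dR j) (hdL : ∀ j ∈ Lset, 0 < dL j)
    (hdC : ∀ j ∈ Cset, 0 < dC j)
    (E : Matrix (Fin n) (Fin m) ℝ) (hE : IsSelectionMatrix E)
    (hadm : AdmissibleInterconnect A Rset Lset Cset dR E) :
    ∀ (x y : Fin m → ℝ) (v i : Fin σ → ℝ),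
      MemDxy A Rset Lset Cset dR x y v i →
        (∀ j ∈ Rset, v j = 0) ∧ (∀ j ∈ Rset, i j = 0) := by
  intro x y v i h
  exact equilibrium_resistors_vanish_general hcover hdR h (hadm.terminal_dotProduct_eq_zero h).ge
end

section
/- Existence of an equilibrium at a primal–dual solution (Theorem C.2, first part). Let f: ℝ^m → ℝ ∪ {∞} be convex, A ∈ ℝ^{(τ−1)×σ} (τ ≥ m+1), {1,…,σ} partitioned into ℛ, ℒ, 𝒞, and D_ℛ, D_ℒ, D_𝒞 diagonal with strictly positive diagonal entries; assume the dynamic interconnect is admissible with respect to a selection matrix E ∈ ℝ^{n×m}. If (x⋆, y⋆) is a primal–dual solution pair, i.e., y⋆ ∈ ∂f(x⋆), x⋆ ∈ ℛ(Eᵀ), y⋆ ∈ 𝒩(E), then there exist v_𝒞 ∈ ℝ^{|𝒞|} and i_ℒ ∈ ℝ^{|ℒ|} such that ((0, 0, v_𝒞), (0, i_ℒ, 0)) ∈ D_{x⋆, y⋆}. -/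
open Matrix

/-- `y` is a subgradient of the extended-real-valued `f` at `x`:
`f(z) ≥ f(x) + ⟨y, z − x⟩` for all `z`. -/
def ESubgradAt {m : ℕ} (f : (Fin m → ℝ) → EReal) (y x : Fin m → ℝ) : Prop :=
  ∀ z : Fin m → ℝ, f x + ((y ⬝ᵥ (z - x) : ℝ) : EReal) ≤ f z

/-- Convexity of an extended-real-valued function. -/
def EConvex {m : ℕ} (f : (Fin m → ℝ) → EReal) : Prop :=
  ∀ x z : Fin m → ℝ, ∀ a b : ℝ, 0 ≤ a → 0 ≤ b → a + b = 1 →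
    f (a • x + b • z) ≤ (a : EReal) * f x + (b : EReal) * f z

/-!
Tellegen's theorem: by Kirchhoff's laws the total power `v ⬝ᵥ i` of the circuit equals the power
`-(x ⬝ᵥ y)` delivered through its ports, which vanishes because `x ∈ ℛ(Eᵀ)` is orthogonal to
`y ∈ 𝒩(E)`. Inductors at rest (`v = 0`) and capacitors at rest (`i = 0`) exchange no power and
resistors only dissipate it, so no resistor dissipates anything, and its current and voltage vanish.
-/

theorem transpose_mulVec_dotProduct_eq_zero {R κ ι : Type*} [NonUnitalCommSemiring R] [Fintype κ]
    [Fintype ι] {E : Matrix κ ι R} {y : ι → R} (hy : E *ᵥ y = 0) (z : κ → R) :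
    (Eᵀ *ᵥ z) ⬝ᵥ y = 0 := by
  rw [dotProduct_comm, dotProduct_transpose_mulVec, hy, dotProduct_zero]

theorem transpose_mulVec_sumElim_dotProduct {R ι π κ : Type*} [NonUnitalCommRing R]
    [Fintype ι] [Fintype π] [Fintype κ] {A : Matrix (ι ⊕ π) κ R} {y : ι → R} {i : κ → R}
    (hi : A *ᵥ i = Sum.elim (-y) 0) (x : ι → R) (e : π → R) :
    (Aᵀ *ᵥ Sum.elim x e) ⬝ᵥ i = -(x ⬝ᵥ y) := by
  rw [dotProduct_comm, dotProduct_transpose_mulVec, hi, sumElim_dotProduct_sumElim,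
    dotProduct_neg, dotProduct_zero, add_zero]

namespace MemDxy

variable {m p σ : ℕ} {A : Matrix (Fin m ⊕ Fin p) (Fin σ) ℝ} {Rset Lset Cset : Finset (Fin σ)}
  {dR : Fin σ → ℝ} {x y : Fin m → ℝ} {v i : Fin σ → ℝ}

theorem dotProduct_eq (h : MemDxy A Rset Lset Cset dR x y v i) : v ⬝ᵥ i = -(x ⬝ᵥ y) := by
  obtain ⟨⟨e, hi, rfl⟩, -⟩ := h
  exact transpose_mulVec_sumElim_dotProduct hi x e

theorem power_nonneg (h : MemDxy A Rset Lset Cset dR x y v i)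
    (hdR : ∀ j ∈ Rset, 0 ≤ dR j) {j : Fin σ} (hj : j ∈ Rset ∪ Lset ∪ Cset) :
    0 ≤ v j * i j := by
  obtain ⟨-, hR, hL, hC⟩ := h
  simp only [Finset.mem_union] at hj
  rcases hj with (hj | hj) | hj
  · rw [hR j hj, mul_assoc]
    exact mul_nonneg (hdR j hj) (mul_self_nonneg (i j))
  · rw [hL j hj, zero_mul]
  · rw [hC j hj, mul_zero]

theorem power_eq_zero (h : MemDxy A Rset Lset Cset dR x y v i)
    (hcover : Rset ∪ Lset ∪ Cset = Finset.univ) (hdR : ∀ j ∈ Rset, 0 ≤ dR j)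
    (hxy : x ⬝ᵥ y = 0) (j : Fin σ) : v j * i j = 0 := by
  have htotal : ∑ j, v j * i j = 0 := by
    rw [← dotProduct, h.dotProduct_eq, hxy, neg_zero]
  have hnonneg (k : Fin σ) : 0 ≤ v k * i k :=
    h.power_nonneg hdR (hcover ▸ Finset.mem_univ k)
  exact congrFun ((Fintype.sum_eq_zero_iff_of_nonneg hnonneg).1 htotal) j

theorem resistor_eq_zero (h : MemDxy A Rset Lset Cset dR x y v i)
    (hcover : Rset ∪ Lset ∪ Cset = Finset.univ) (hdR : ∀ j ∈ Rset, 0 < dR j)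
    (hxy : x ⬝ᵥ y = 0) {j : Fin σ} (hj : j ∈ Rset) : v j = 0 ∧ i j = 0 := by
  have hpower := h.power_eq_zero hcover (fun k hk => (hdR k hk).le) hxy j
  have hohm : v j = dR j * i j := h.2.1 j hj
  have hcurrent : i j = 0 := by
    simpa [hohm, (hdR j hj).ne'] using hpower
  exact ⟨by rw [hohm, hcurrent, mul_zero], hcurrent⟩

end MemDxy

theorem equilibrium_exists_at_solution_general {m p σ n : ℕ}
    (A : Matrix (Fin m ⊕ Fin p) (Fin σ) ℝ) (Rset Lset Cset : Finset (Fin σ))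
    (hcover : Rset ∪ Lset ∪ Cset = Finset.univ)
    (dR : Fin σ → ℝ) (hdR : ∀ j ∈ Rset, 0 < dR j)
    (E : Matrix (Fin n) (Fin m) ℝ)
    (hadm : AdmissibleInterconnect A Rset Lset Cset dR E)
    (x y : Fin m → ℝ) (hx : ∃ z : Fin n → ℝ, x = Eᵀ *ᵥ z) (hy : E *ᵥ y = 0) :
    ∃ v i : Fin σ → ℝ,
      MemDxy A Rset Lset Cset dR x y v i ∧ (∀ j ∈ Rset, v j = 0 ∧ i j = 0) := by
  obtain ⟨v, i, hmem⟩ := (hadm x y).2 ⟨hx, hy⟩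
  obtain ⟨z, rfl⟩ := hx
  exact ⟨v, i, hmem, fun _ hj =>
    hmem.resistor_eq_zero hcover hdR (transpose_mulVec_dotProduct_eq_zero hy z) hj⟩

/-- **Existence of an equilibrium at a primal–dual solution
(Theorem C.2, first part).**  If `(x⋆, y⋆)` is a primal–dual solution pair,
then there is an equilibrium state `((0, 0, v_𝒞), (0, i_ℒ, 0)) ∈ D_{x⋆,y⋆}`. -/
theorem equilibrium_exists_at_solution {m p σ n : ℕ}
    (f : (Fin m → ℝ) → EReal) (hconv : EConvex f) (hnb : ∀ x, f x ≠ ⊥)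
    (A : Matrix (Fin m ⊕ Fin p) (Fin σ) ℝ)
    (Rset Lset Cset : Finset (Fin σ))
    (hRL : Disjoint Rset Lset) (hRC : Disjoint Rset Cset) (hLC : Disjoint Lset Cset)
    (hcover : Rset ∪ Lset ∪ Cset = Finset.univ)
    (dR dL dC : Fin σ → ℝ)
    (hdR : ∀ j ∈ Rset, 0 < dR j) (hdL : ∀ j ∈ Lset, 0 < dL j)
    (hdC : ∀ j ∈ Cset, 0 < dC j)
    (E : Matrix (Fin n) (Fin m) ℝ) (hE : IsSelectionMatrix E)
    (hadm : AdmissibleInterconnect A Rset Lset Cset dR E)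
    (xstar ystar : Fin m → ℝ)
    (hsub : ESubgradAt f ystar xstar)
    (hprim : ∃ z : Fin n → ℝ, xstar = E.transpose.mulVec z)
    (hdual : E.mulVec ystar = 0) :
    ∃ v i : Fin σ → ℝ,
      MemDxy A Rset Lset Cset dR xstar ystar v i ∧
      (∀ j ∈ Rset, v j = 0 ∧ i j = 0) :=
  equilibrium_exists_at_solution_general A Rset Lset Cset hcover dR hdR E hadm xstar ystar
    hprim hdual
end

section
/- Skew-symmetric coordinate representation of complementary subspaces (Lemma B.3). For every real k×n matrix B there exist a subset S ⊆ {1,…,n} and a skew-symmetric matrix Ĥ ∈ ℝ^{n×n} such that, writing J for the diagonal 0/1 matrix with J_{ll} = 1 iff l ∈ S, the following equivalence holds for all a, b ∈ ℝ^n: [a ∈ range(Bᵀ) and b ∈ ker(B)] if and only if (I − J)a + Jb = Ĥ (Ja + (I − J)b). -/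
open Matrix

/-!
Let `S` index a basis of the column space of `B`. Up to a permutation of the columns, `B` factors
as `C * [1 | M]`, where `C` consists of the columns in `S` and has a left inverse, so `B` has the
same row space and kernel as `[1 | M]`. Splitting `a` and `b` along `S` and its complement, `a` lies
in this row space iff `a₂ = Mᵀ a₁`, and `b` lies in this kernel iff `b₁ = -M b₂`. The two conditions
together say that `(b₁, a₂)` is the image of `(a₁, b₂)` under the skew-symmetric block matrix
`[0, -M; Mᵀ, 0]`.
-/

variable {m n p q : Type*}

section LeftInvertibleFactor

variable {R : Type*} [Fintype m] [Fintype p] [DecidableEq p]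

theorem exists_eq_transpose_mul_mulVec_iff [CommSemiring R] {L : Matrix p m R}
    {C : Matrix m p R} (hLC : L * C = 1) (A : Matrix p n R) (a : n → R) :
    (∃ z, a = (C * A)ᵀ *ᵥ z) ↔ ∃ w, a = Aᵀ *ᵥ w := by
  constructor
  · rintro ⟨z, rfl⟩
    exact ⟨Cᵀ *ᵥ z, by rw [transpose_mul, mulVec_mulVec]⟩
  · rintro ⟨w, rfl⟩
    refine ⟨Lᵀ *ᵥ w, ?_⟩
    rw [mulVec_mulVec, ← transpose_mul, ← Matrix.mul_assoc, hLC, Matrix.one_mul]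

theorem mul_mulVec_eq_zero_iff [Semiring R] [Fintype n] {L : Matrix p m R} {C : Matrix m p R}
    (hLC : L * C = 1) (A : Matrix p n R) (b : n → R) :
    (C * A) *ᵥ b = 0 ↔ A *ᵥ b = 0 := by
  constructor <;> intro h
  · calc A *ᵥ b = L *ᵥ ((C * A) *ᵥ b) := by
          rw [mulVec_mulVec, ← Matrix.mul_assoc, hLC, Matrix.one_mul]
      _ = 0 := by rw [h, mulVec_zero]
  · rw [← mulVec_mulVec, h, mulVec_zero]

end LeftInvertibleFactor

section ReducedForm

variable {R : Type*}

theorem transpose_fromBlocks_zero_neg_transpose_zero [AddGroup R] (M : Matrix p q R) :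
    (fromBlocks 0 (-M) Mᵀ 0)ᵀ = -fromBlocks 0 (-M) Mᵀ 0 := by
  simp [fromBlocks_transpose, fromBlocks_neg]

theorem exists_eq_transpose_fromCols_one_mulVec_iff [Semiring R] [Fintype p]
    [DecidableEq p] (M : Matrix p q R) (a : p ⊕ q → R) :
    (∃ w, a = (fromCols 1 M)ᵀ *ᵥ w) ↔ a ∘ Sum.inr = Mᵀ *ᵥ (a ∘ Sum.inl) := by
  simp only [transpose_fromCols, transpose_one, fromRows_mulVec, one_mulVec]
  constructor
  · rintro ⟨w, rfl⟩
    rfl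
  · intro h
    exact ⟨a ∘ Sum.inl, by rw [← h, Sum.elim_comp_inl_inr]⟩

theorem fromCols_one_mulVec_eq_zero_iff [Ring R] [Fintype p] [Fintype q] [DecidableEq p]
    (M : Matrix p q R) (b : p ⊕ q → R) :
    fromCols 1 M *ᵥ b = 0 ↔ b ∘ Sum.inl = -M *ᵥ (b ∘ Sum.inr) := by
  rw [fromCols_mulVec, one_mulVec, neg_mulVec, add_eq_zero_iff_eq_neg]

theorem mem_rowSpace_and_mem_ker_fromCols_one_iff [Ring R] [Fintype p] [Fintype q] [DecidableEq p]
    (M : Matrix p q R) (a b : p ⊕ q → R) :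
    ((∃ w, a = (fromCols 1 M)ᵀ *ᵥ w) ∧ fromCols 1 M *ᵥ b = 0) ↔
      Sum.elim (b ∘ Sum.inl) (a ∘ Sum.inr) =
        fromBlocks 0 (-M) Mᵀ 0 *ᵥ Sum.elim (a ∘ Sum.inl) (b ∘ Sum.inr) := by
  rw [exists_eq_transpose_fromCols_one_mulVec_iff, fromCols_one_mulVec_eq_zero_iff, and_comm,
    fromBlocks_mulVec, Sum.elim_comp_inl, Sum.elim_comp_inr, zero_mulVec, zero_mulVec, zero_add,
    add_zero, Sum.elim_eq_iff]

end ReducedForm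

section ColumnBasis

variable {K : Type*} [Field K]

theorem exists_mul_eq_one_of_linearIndependent_col [Fintype m] [Finite p] [DecidableEq p]
    {C : Matrix m p K} (hC : LinearIndependent K C.col) : ∃ L : Matrix p m K, L * C = 1 := by
  classical
  cases nonempty_fintype p
  obtain ⟨g, hg⟩ := C.mulVecLin.exists_leftInverse_of_injective
    (LinearMap.ker_eq_bot.2 (mulVec_injective_iff.2 hC))
  refine ⟨g.toMatrix', ?_⟩
  rw [← LinearMap.toMatrix'_toLin' C, ← LinearMap.toMatrix'_comp, toLin'_apply', hg,
    LinearMap.toMatrix'_id]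

theorem exists_linearIndependent_col_and_eq_mul [Finite n] (B : Matrix m n K) :
    ∃ (S : Finset n) (A : Matrix S n K),
      LinearIndependent K (B.submatrix id ((↑) : S → n)).col ∧ B = B.submatrix id (↑) * A := by
  obtain ⟨T, -, -, hspan, hT⟩ :=
    exists_linearIndepOn_extension (linearIndepOn_empty K B.col) (Set.subset_univ ∅)
  lift T to Finset n using T.toFinite
  have hcol (l : n) : ∃ c, B.submatrix id ((↑) : T → n) *ᵥ c = B.col l := by
    have hl : B.col l ∈ Submodule.span K (B.col '' T) := hspan ⟨l, Set.mem_univ l, rfl⟩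
    rw [Set.image_eq_range] at hl
    exact LinearMap.mem_range.1 ((range_mulVecLin (B.submatrix id ((↑) : T → n))).ge hl)
  choose c hc using hcol
  exact ⟨T, (of c)ᵀ, hT, Matrix.ext fun i l => (congrFun (hc l) i).symm⟩

theorem exists_submatrix_sumCompl_eq_mul_fromCols_one [Fintype m] [Finite n] [DecidableEq n]
    (B : Matrix m n K) :
    ∃ (S : Finset n) (L : Matrix S m K) (C : Matrix m S K) (M : Matrix S {l // l ∉ S} K),
      L * C = 1 ∧ B.submatrix id (Equiv.sumCompl (· ∈ S)) = C * fromCols 1 M := by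
  obtain ⟨S, A, hS, hB⟩ := exists_linearIndependent_col_and_eq_mul B
  obtain ⟨L, hL⟩ := exists_mul_eq_one_of_linearIndependent_col hS
  refine ⟨S, L, B.submatrix id (↑), A.submatrix id (↑), hL, ?_⟩
  rw [mul_fromCols, Matrix.mul_one]
  ext i (s | l)
  · rfl
  · exact congrFun₂ hB i l

end ColumnBasis

section Reindex

theorem exists_eq_transpose_submatrix_mulVec_iff {R : Type*} [NonUnitalNonAssocSemiring R]
    [Fintype m] (B : Matrix m n R) (e : p ≃ n) (a : n → R) :
    (∃ z, a ∘ e = (B.submatrix id e)ᵀ *ᵥ z) ↔ ∃ z, a = Bᵀ *ᵥ z :=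
  exists_congr fun z => e.surjective.injective_comp_right.eq_iff (b := Bᵀ *ᵥ z)

theorem submatrix_id_equiv_mulVec_comp {R : Type*} [NonUnitalNonAssocSemiring R] [Fintype n]
    [Fintype p] (B : Matrix m n R) (e : p ≃ n) (b : n → R) :
    B.submatrix id e *ᵥ (b ∘ e) = B *ᵥ b := by
  rw [submatrix_mulVec_equiv, Function.comp_assoc, e.self_comp_symm, Function.comp_id,
    Function.comp_id]

theorem ite_mem_comp_sumCompl {α : Type*} [DecidableEq n] (S : Finset n) (x y : n → α) :
    (fun l => if l ∈ S then x l else y l) ∘ Equiv.sumCompl (· ∈ S) =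
      Sum.elim (x ∘ (↑)) (y ∘ (↑)) := by
  ext (s | l)
  · simp
  · simp [l.2]

end Reindex

theorem skew_symmetric_representation_general {K : Type*} [Field K] [Fintype m] [Fintype n]
    [DecidableEq n] (B : Matrix m n K) :
    ∃ (S : Finset n) (H : Matrix n n K),
      Hᵀ = -H ∧
      ∀ a b : n → K,
        ((∃ z : m → K, a = Bᵀ *ᵥ z) ∧ B *ᵥ b = 0) ↔
          (fun l => if l ∈ S then b l else a l) = H *ᵥ (fun l => if l ∈ S then a l else b l) := by
  obtain ⟨S, L, C, M, hLC, hB⟩ := exists_submatrix_sumCompl_eq_mul_fromCols_one B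
  set e := Equiv.sumCompl (· ∈ S)
  set H := fromBlocks 0 (-M) Mᵀ 0
  refine ⟨S, H.submatrix e.symm e.symm, ?_, fun a b => ?_⟩
  · rw [transpose_submatrix, transpose_fromBlocks_zero_neg_transpose_zero, submatrix_neg,
      Pi.neg_apply, Pi.neg_apply]
  calc ((∃ z, a = Bᵀ *ᵥ z) ∧ B *ᵥ b = 0)
    _ ↔ (∃ z, a ∘ e = (C * fromCols 1 M)ᵀ *ᵥ z) ∧ (C * fromCols 1 M) *ᵥ (b ∘ e) = 0 := by
      rw [← hB, exists_eq_transpose_submatrix_mulVec_iff, submatrix_id_equiv_mulVec_comp]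
    _ ↔ (∃ w, a ∘ e = (fromCols 1 M)ᵀ *ᵥ w) ∧ fromCols 1 M *ᵥ (b ∘ e) = 0 := by
      rw [exists_eq_transpose_mul_mulVec_iff hLC, mul_mulVec_eq_zero_iff hLC]
    _ ↔ Sum.elim (b ∘ (↑)) (a ∘ (↑)) = H *ᵥ Sum.elim (a ∘ (↑)) (b ∘ (↑)) :=
      mem_rowSpace_and_mem_ker_fromCols_one_iff M (a ∘ e) (b ∘ e)
    _ ↔ _ := by
      rw [submatrix_mulVec_equiv, e.symm_symm, Equiv.eq_comp_symm, ite_mem_comp_sumCompl,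
        ite_mem_comp_sumCompl]

/-- **Skew-symmetric coordinate representation of complementary subspaces
(Lemma B.3).**  For every real `k×n` matrix `B` there are a subset
`S ⊆ {1,…,n}` and a skew-symmetric `Ĥ` such that for all `a, b ∈ ℝⁿ`:
`a ∈ range Bᵀ ∧ b ∈ ker B` iff `(I−J)a + Jb = Ĥ(Ja + (I−J)b)`, where `J` is the
0/1 diagonal matrix of `S` (so `((I−J)a + Jb) l = if l ∈ S then b l else a l`). -/
theorem skew_symmetric_representation {k n : ℕ} (B : Matrix (Fin k) (Fin n) ℝ) :
    ∃ (S : Finset (Fin n)) (H : Matrix (Fin n) (Fin n) ℝ),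
      H.transpose = -H ∧
      ∀ a b : Fin n → ℝ,
        ((∃ z : Fin k → ℝ, a = B.transpose.mulVec z) ∧ B.mulVec b = 0) ↔
          (fun l => if l ∈ S then b l else a l) =
            H.mulVec (fun l => if l ∈ S then a l else b l) :=
  skew_symmetric_representation_general B
end

section
/- Coordinate splitting of a subspace and its orthogonal complement (invertibility of the selection matrix G in the proof of Lemma B.3). For every linear subspace V ⊆ ℝ^n there exists a subset S ⊆ {1,…,n} with |S| = dim V such that the linear map V × V^⊥ → ℝ^n given by (a, b) ↦ Π_S a + Π_{S^c} b is a bijection, where Π_S denotes the coordinate projection of ℝ^n that keeps the entries indexed by S and sets the remaining entries to 0, and S^c = {1,…,n} \ S. -/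
open Matrix

/-!
A set `S` of coordinates is an information set of a subspace `V` of `K ^ ι` if the vectors of `V`
can be prescribed freely, and uniquely, on `S`. Completing a basis of `V` by standard basis vectors
`e_t`, `t ∈ T`, to one of `K ^ ι` shows that `Tᶜ` is such a set. If `S` is an information set of
`V`, then `V` has a basis `(g_s)` with `g_s = e_s` on `S`, so `b ∈ V^⊥` means that
`b_s = -∑ t ∉ S, (g_s)_t b_t` for all `s ∈ S`: the entries of `b` outside `S` are free and determine
the others. Thus `Sᶜ` is an information set of `V^⊥`, and the two halves of a vector of `K ^ ι` are
matched independently, over any division ring.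
-/

/-- An information set of a code `C` (a set of words `ι → α`), as in coding theory: a set of
positions at which every pattern occurs in exactly one word of `C`. -/
def IsInformationSet {ι α : Type*} (C : Set (ι → α)) (S : Set ι) : Prop :=
  Set.BijOn S.domRestrict C Set.univ

theorem IsInformationSet.bijective_piecewise {ι α : Type*} {C D : Set (ι → α)} {S : Set ι}
    [∀ i, Decidable (i ∈ S)] (hC : IsInformationSet C S) (hD : IsInformationSet D Sᶜ) :
    Function.Bijective fun q : C × D => S.piecewise (q.1 : ι → α) (q.2 : ι → α) := by
  constructor
  · rintro ⟨⟨a, ha⟩, b, hb⟩ ⟨⟨a', ha'⟩, b', hb'⟩ (h : S.piecewise a b = S.piecewise a' b')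
    have haa' : a = a' := hC.injOn ha ha' (by simpa using congrArg S.domRestrict h)
    have hbb' : b = b' := hD.injOn hb hb' (by simpa using congrArg Sᶜ.domRestrict h)
    subst haa' hbb'
    rfl
  · intro y
    obtain ⟨a, ha, hay⟩ := hC.surjOn (Set.mem_univ (S.domRestrict y))
    obtain ⟨b, hb, hby⟩ := hD.surjOn (Set.mem_univ (Sᶜ.domRestrict y))
    refine ⟨(⟨a, ha⟩, ⟨b, hb⟩), ?_⟩
    change S.piecewise a b = y
    rw [Set.domRestrict_eq_domRestrict_iff] at hay hby
    ext i
    by_cases hi : i ∈ S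
    · simpa [hi] using hay hi
    · simpa [hi] using hby hi

theorem exists_isCompl_span_image {ι K M : Type*} [DivisionRing K] [AddCommGroup M] [Module K M]
    {v : ι → M} (hv : Submodule.span K (Set.range v) = ⊤) (V : Submodule K M) :
    ∃ T : Set ι, IsCompl V (Submodule.span K (v '' T)) := by
  obtain ⟨T, -, -, hspan, hT⟩ :=
    exists_linearIndepOn_extension (linearIndepOn_empty K (V.mkQ ∘ v)) (Set.empty_subset Set.univ)
  refine ⟨T, ?_, ?_⟩
  · have h := Submodule.range_ker_disjoint (f := V.mkQ) (v := fun t : T => v t) hT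
    rwa [Submodule.ker_mkQ, ← Set.image_eq_range, disjoint_comm] at h
  · rw [codisjoint_iff, ← Submodule.map_mkQ_eq_top, Submodule.map_span, eq_top_iff,
      ← Submodule.range_mkQ V, LinearMap.range_eq_map, ← hv, Submodule.map_span, Submodule.span_le]
    simpa only [Set.image_univ, Set.range_comp, Set.image_comp] using hspan

section Semiring

variable {ι R : Type*} [Semiring R] {V : Submodule R (ι → R)} {S T : Set ι}

theorem IsInformationSet.card_eq_finrank [StrongRankCondition R] {S : Finset ι}
    (hS : IsInformationSet (V : Set (ι → R)) S) : S.card = Module.finrank R V := by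
  let e : V ≃ₗ[R] (S → R) :=
    .ofBijective ((LinearMap.funLeft R R (Subtype.val : S → ι)).domRestrict V)
      ⟨hS.injOn.injective, Set.surjOn_iff_surjective.1 hS.surjOn⟩
  rw [e.finrank_eq, Module.finrank_fintype_fun_eq_card, Fintype.card_coe]

theorem mem_span_basisFun_image [Finite ι] {x : ι → R} :
    x ∈ Submodule.span R (Pi.basisFun R ι '' T) ↔ ∀ i ∉ T, x i = 0 := by
  rw [(Pi.basisFun R ι).mem_span_image]
  simp only [Set.subset_def, Finset.mem_coe, Finsupp.mem_support_iff, Pi.basisFun_repr]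
  exact forall_congr' fun i => not_imp_comm

/-- The `g s` are the rows of a generator matrix of `V` in systematic form. -/
theorem IsInformationSet.exists_span_range_eq [Finite S] [DecidableEq S]
    (hS : IsInformationSet (V : Set (ι → R)) S) :
    ∃ g : S → ι → R, Submodule.span R (Set.range g) = V ∧
      ∀ s, S.domRestrict (g s) = Pi.single s 1 := by
  have := Fintype.ofFinite S
  choose g hgV hg using fun s : S => hS.surjOn (Set.mem_univ (Pi.single s (1 : R)))
  have hspan : Submodule.span R (Set.range g) ≤ V := by
    rw [Submodule.span_le]
    exact Set.range_subset_iff.2 hgV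
  refine ⟨g, hspan.antisymm fun a ha => ?_, hg⟩
  have hsum : ∑ s : S, a s • g s ∈ Submodule.span R (Set.range g) :=
    Submodule.sum_smul_mem _ _ fun s _ => Submodule.subset_span ⟨s, rfl⟩
  suffices a = ∑ s : S, a s • g s by rwa [this]
  refine hS.injOn ha (hspan hsum) (funext fun t => ?_)
  have hgt (s : S) : g s t = (Pi.single s 1 : S → R) t := congrFun (hg s) t
  simp [Finset.sum_apply, hgt, Pi.single_apply]

variable [Fintype ι]

theorem forall_mem_span_dotProduct_eq_zero_iff {s : Set (ι → R)} {b : ι → R} :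
    (∀ a ∈ Submodule.span R s, a ⬝ᵥ b = 0) ↔ ∀ a ∈ s, a ⬝ᵥ b = 0 := by
  refine ⟨fun h a ha => h a (Submodule.subset_span ha), fun h a ha => ?_⟩
  induction ha using Submodule.span_induction with
  | mem a ha => exact h a ha
  | zero => exact zero_dotProduct b
  | add x y _ _ hx hy => rw [add_dotProduct, hx, hy, add_zero]
  | smul c x _ hx => rw [smul_dotProduct, hx, smul_zero]

theorem dotProduct_eq_apply_of_domRestrict_eq_single [DecidableEq S] {x u : ι → R} {s : S}
    (hx : S.domRestrict x = Pi.single s 1) (hu : ∀ i ∉ S, u i = 0) : x ⬝ᵥ u = u s := by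
  have hxi (i : S) : x i = (Pi.single s 1 : S → R) i := congrFun hx i
  rw [dotProduct, Finset.sum_eq_single_of_mem (s : ι) (Finset.mem_univ _), hxi, Pi.single_eq_same,
    one_mul]
  intro i _ his
  by_cases hi : i ∈ S
  · rw [hxi ⟨i, hi⟩, Pi.single_eq_of_ne (fun h => his (congrArg Subtype.val h)), zero_mul]
  · rw [hu i hi, mul_zero]

end Semiring

section Ring

variable {ι R : Type*} [Ring R] {V : Submodule R (ι → R)} {S T : Set ι}

theorem isInformationSet_compl_of_isCompl_span [Finite ι]
    (h : IsCompl V (Submodule.span R (Pi.basisFun R ι '' T))) :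
    IsInformationSet (V : Set (ι → R)) Tᶜ := by
  refine ⟨Set.mapsTo_univ _ _, fun a ha a' ha' haa' => ?_, fun y _ => ?_⟩
  · have hsub : a - a' ∈ Submodule.span R (Pi.basisFun R ι '' T) :=
      mem_span_basisFun_image.2 fun i hi =>
        sub_eq_zero.2 (Set.domRestrict_eq_domRestrict_iff.1 haa' hi)
    exact sub_eq_zero.1 (Submodule.disjoint_def.1 h.disjoint _ (V.sub_mem ha ha') hsub)
  · obtain ⟨a, ha, w, hw, haw⟩ := Submodule.mem_sup.1
      (h.sup_eq_top ▸ Submodule.mem_top : Function.extend Subtype.val y 0 ∈ _)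
    refine ⟨a, ha, funext fun i => ?_⟩
    have hi := congrFun haw i
    rwa [Pi.add_apply, mem_span_basisFun_image.1 hw i i.2, add_zero,
      Subtype.val_injective.extend_apply] at hi

theorem IsInformationSet.compl_dotProduct_eq_zero [Fintype ι]
    (hS : IsInformationSet (V : Set (ι → R)) S) :
    IsInformationSet {b : ι → R | ∀ a ∈ V, a ⬝ᵥ b = 0} Sᶜ := by
  classical
  obtain ⟨g, rfl, hg⟩ := hS.exists_span_range_eq
  simp only [forall_mem_span_dotProduct_eq_zero_iff, Set.forall_mem_range]
  refine ⟨Set.mapsTo_univ _ _, fun b hb b' hb' hbb' => ?_, fun y _ => ?_⟩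
  · have hoff : ∀ i ∉ S, (b - b') i = 0 := fun i hi =>
      sub_eq_zero.2 (Set.domRestrict_eq_domRestrict_iff.1 hbb' hi)
    refine sub_eq_zero.1 (funext fun i => ?_)
    by_cases hi : i ∈ S
    · rw [← dotProduct_eq_apply_of_domRestrict_eq_single (hg ⟨i, hi⟩) hoff, dotProduct_sub, hb, hb',
        sub_zero, Pi.zero_apply]
    · exact hoff i hi
  · let w : ι → R := Function.extend Subtype.val y 0
    -- The correction `u` is supported on `S`, so adding it to `w` leaves the prescribed entries.
    let u : ι → R := Function.extend Subtype.val (fun s => -(g s ⬝ᵥ w)) 0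
    have hu_on (s : S) : u s = -(g s ⬝ᵥ w) := Subtype.val_injective.extend_apply _ _ s
    have hu_off : ∀ i ∉ S, u i = 0 := fun i hi =>
      Function.extend_apply' _ _ _ (by rintro ⟨s, rfl⟩; exact hi s.2)
    refine ⟨w + u, fun s => ?_, funext fun i => ?_⟩
    · rw [dotProduct_add, dotProduct_eq_apply_of_domRestrict_eq_single (hg s) hu_off, hu_on,
        add_neg_cancel]
    · rw [Set.domRestrict_apply, Pi.add_apply, hu_off i i.2, add_zero]
      exact Subtype.val_injective.extend_apply _ _ i

end Ring

theorem exists_isInformationSet {ι K : Type*} [Finite ι] [DivisionRing K]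
    (V : Submodule K (ι → K)) : ∃ S : Set ι, IsInformationSet (V : Set (ι → K)) S :=
  let ⟨T, hT⟩ := exists_isCompl_span_image (Pi.basisFun K ι).span_eq V
  ⟨Tᶜ, isInformationSet_compl_of_isCompl_span hT⟩

theorem coordinate_splitting_subspace_general {ι K : Type*} [Fintype ι] [DecidableEq ι]
    [DivisionRing K] (V : Submodule K (ι → K)) :
    ∃ S : Finset ι, S.card = Module.finrank K V ∧
      Function.Bijective
        (fun q : V × {b : ι → K // ∀ a ∈ V, a ⬝ᵥ b = 0} =>
          (fun l => if l ∈ S then (q.1 : ι → K) l else (q.2 : ι → K) l)) := by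
  obtain ⟨S, hS⟩ := exists_isInformationSet V
  lift S to Finset ι using S.toFinite
  exact ⟨S, hS.card_eq_finrank, hS.bijective_piecewise hS.compl_dotProduct_eq_zero⟩

/-- **Coordinate splitting of a subspace and its orthogonal complement
(invertibility of the selection matrix `G` in the proof of Lemma B.3).**
For every linear subspace `V ⊆ ℝⁿ` there is a subset `S` of the coordinates
with `|S| = dim V` such that `(a, b) ↦ Π_S a + Π_{Sᶜ} b` is a bijection from
`V × V^⊥` onto `ℝⁿ`, where `V^⊥ = {b : ⟨a, b⟩ = 0 for all a ∈ V}` is the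
orthogonal complement for the Euclidean inner product. -/
theorem coordinate_splitting_subspace {n : ℕ} (V : Submodule ℝ (Fin n → ℝ)) :
    ∃ S : Finset (Fin n), S.card = Module.finrank ℝ V ∧
      Function.Bijective
        (fun q : V × {b : Fin n → ℝ // ∀ a ∈ V, a ⬝ᵥ b = 0} =>
          (fun l => if l ∈ S then (q.1 : Fin n → ℝ) l else (q.2 : Fin n → ℝ) l)) :=
  coordinate_splitting_subspace_general V
end

section
/- Strong monotonicity of the partial inverse of a strongly monotone, cocoercive operator (intermediate claim in the proof of Lemma B.5). Let μ, β > 0 and let 𝔸: ℝ^d ⇉ ℝ^d be a set-valued operator such that for all (x₁, y₁), (x₂, y₂) in its graph: ⟨y₁ − y₂, x₁ − x₂⟩ ≥ μ‖x₁ − x₂‖² and ⟨y₁ − y₂, x₁ − x₂⟩ ≥ β‖y₁ − y₂‖². Let K ⊆ ℝ^d be a linear subspace, Q ∈ ℝ^{d×d} a permutation matrix, and H₀ ∈ ℝ^{d×d} a skew-symmetric matrix. Then the operator T(w) = { Q u − H₀ w : u ∈ 𝔸_K(Qᵀ w) } is (min{μ, β}/2)-strongly monotone: for all (w₁, u₁),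 (w₂, u₂) in the graph of T, ⟨u₁ − u₂, w₁ − w₂⟩ ≥ (min{μ, β}/2) ‖w₁ − w₂‖². -/
open Matrix

/-! The map `(x, y) ↦ (Π_K x + Π_{K⊥} y, Π_K y + Π_{K⊥} x)` taking the graph of `𝔸` to that of
`𝔸_K` preserves both the pairing `⟨y, x⟩` and the energy `‖x‖² + ‖y‖²`. Strong monotonicity and
cocoercivity together say that `⟨y, x⟩` dominates `min{μ, β} / 2` times the energy of an increment
of the graph, and the energy dominates the square norm of either component. Passing from `𝔸_K`
to `T` costs nothing: `Qᵀ` is an isometry and the quadratic form of `H₀` vanishes. -/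

section DotProduct

variable {m n R : Type*} [Fintype m] [Fintype n]

theorem dotProduct_self_nonneg_s13 [Ring R] [LinearOrder R] [IsOrderedRing R] (v : n → R) :
    0 ≤ v ⬝ᵥ v :=
  Finset.sum_nonneg fun i _ ↦ mul_self_nonneg (v i)

theorem mulVec_dotProduct_eq_dotProduct_transpose_mulVec [CommSemiring R] (M : Matrix m n R)
    (v : n → R) (w : m → R) : (M *ᵥ v) ⬝ᵥ w = v ⬝ᵥ (Mᵀ *ᵥ w) := by
  rw [dotProduct_mulVec, vecMul_transpose]

theorem transpose_mulVec_dotProduct_self [CommSemiring R] [DecidableEq m]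
    {Q : Matrix m n R} (hQ : Q * Qᵀ = 1) (w : m → R) : (Qᵀ *ᵥ w) ⬝ᵥ (Qᵀ *ᵥ w) = w ⬝ᵥ w := by
  rw [mulVec_dotProduct_eq_dotProduct_transpose_mulVec, transpose_transpose, mulVec_mulVec, hQ,
    one_mulVec]

theorem mulVec_dotProduct_self_eq_zero [CommRing R] [NoZeroDivisors R] [CharZero R]
    {H : Matrix m m R} (hH : Hᵀ = -H) (w : m → R) : (H *ᵥ w) ⬝ᵥ w = 0 := by
  rw [← CharZero.eq_neg_self_iff]
  calc (H *ᵥ w) ⬝ᵥ w = w ⬝ᵥ (Hᵀ *ᵥ w) := mulVec_dotProduct_eq_dotProduct_transpose_mulVec H w w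
    _ = -((H *ᵥ w) ⬝ᵥ w) := by rw [hH, neg_mulVec, dotProduct_neg, dotProduct_comm]

end DotProduct

section Graph

variable {n R : Type*} [Fintype n] [CommRing R] [LE R]

/-- Strong monotonicity with constant `c` of the set-valued operator with graph `A`. -/
def IsStronglyMonotone (c : R) (A : Set ((n → R) × (n → R))) : Prop :=
  ∀ p ∈ A, ∀ q ∈ A, c * ((p.1 - q.1) ⬝ᵥ (p.1 - q.1)) ≤ (p.2 - q.2) ⬝ᵥ (p.1 - q.1)

/-- Cocoercivity with constant `c` of the set-valued operator with graph `A`. -/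
def IsCocoercive (c : R) (A : Set ((n → R) × (n → R))) : Prop :=
  ∀ p ∈ A, ∀ q ∈ A, c * ((p.2 - q.2) ⬝ᵥ (p.2 - q.2)) ≤ (p.2 - q.2) ⬝ᵥ (p.1 - q.1)

end Graph

section Congruence

variable {m n R : Type*} [Fintype m] [Fintype n] [CommRing R]

/-- The graph of the operator `w ↦ Q (A (Qᵀ w)) - H w`, where `A` is the graph of a set-valued
operator. -/
def congrSub (Q : Matrix m n R) (H : Matrix m m R) (A : Set ((n → R) × (n → R))) :
    Set ((m → R) × (m → R)) :=
  {(w, Q *ᵥ u - H *ᵥ w) | (w : m → R) (u : n → R) (_ : (Qᵀ *ᵥ w, u) ∈ A)}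

theorem IsStronglyMonotone.congrSub [DecidableEq m] [PartialOrder R] [IsOrderedAddMonoid R]
    {c : R} {A : Set ((n → R) × (n → R))} (hA : IsStronglyMonotone c A) {Q : Matrix m n R}
    (hQ : Q * Qᵀ = 1) {H : Matrix m m R} (hH : ∀ w, (H *ᵥ w) ⬝ᵥ w ≤ 0) :
    IsStronglyMonotone c (congrSub Q H A) := by
  rintro _ ⟨w₁, u₁, hu₁, rfl⟩ _ ⟨w₂, u₂, hu₂, rfl⟩
  calc c * ((w₁ - w₂) ⬝ᵥ (w₁ - w₂))
      = c * ((Qᵀ *ᵥ w₁ - Qᵀ *ᵥ w₂) ⬝ᵥ (Qᵀ *ᵥ w₁ - Qᵀ *ᵥ w₂)) := by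
        rw [← mulVec_sub, transpose_mulVec_dotProduct_self hQ]
    _ ≤ (u₁ - u₂) ⬝ᵥ (Qᵀ *ᵥ w₁ - Qᵀ *ᵥ w₂) := hA _ hu₁ _ hu₂
    _ = (Q *ᵥ (u₁ - u₂)) ⬝ᵥ (w₁ - w₂) := by
        rw [← mulVec_sub, mulVec_dotProduct_eq_dotProduct_transpose_mulVec]
    _ ≤ (Q *ᵥ (u₁ - u₂)) ⬝ᵥ (w₁ - w₂) - (H *ᵥ (w₁ - w₂)) ⬝ᵥ (w₁ - w₂) :=
        (le_sub_self_iff _).mpr (hH _)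
    _ = ((Q *ᵥ u₁ - H *ᵥ w₁) - (Q *ᵥ u₂ - H *ᵥ w₂)) ⬝ᵥ (w₁ - w₂) := by
        rw [← sub_dotProduct, mulVec_sub, mulVec_sub, sub_sub_sub_comm]

end Congruence

section PartialInverse

variable {n R : Type*} [Fintype n] [DecidableEq n]

/-- The map on pairs `(x, y)` that exchanges the components of `x` and `y` in `K⊥`; it carries the
graph of an operator to the graph of its partial inverse. The subspace `K` is encoded by its
orthogonal projection matrix `P`. -/
def partialSwap [Ring R] (P : Matrix n n R) (q : (n → R) × (n → R)) : (n → R) × (n → R) :=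
  (P *ᵥ q.1 + (1 - P) *ᵥ q.2, P *ᵥ q.2 + (1 - P) *ᵥ q.1)

/-- The graph of the partial inverse `𝔸_K`, where `P` is the orthogonal projection matrix of `K`
and `A` is the graph of `𝔸`. -/
def partialInverse [Ring R] (P : Matrix n n R) (A : Set ((n → R) × (n → R))) :
    Set ((n → R) × (n → R)) :=
  partialSwap P '' A

theorem partialSwap_sub [Ring R] (P : Matrix n n R) (p q : (n → R) × (n → R)) :
    partialSwap P (p - q) = partialSwap P p - partialSwap P q := by
  simp only [partialSwap, Prod.fst_sub, Prod.snd_sub, mulVec_sub, Prod.mk_sub_mk,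
    sub_add_sub_comm]

section Isometry

variable [CommRing R] {P : Matrix n n R}

theorem mulVec_add_one_sub_mulVec_dotProduct (hP : P.IsSymm) (hP' : IsIdempotentElem P)
    (x y x' y' : n → R) :
    (P *ᵥ x + (1 - P) *ᵥ y) ⬝ᵥ (P *ᵥ x' + (1 - P) *ᵥ y') =
      x ⬝ᵥ (P *ᵥ x') + y ⬝ᵥ ((1 - P) *ᵥ y') := by
  simp only [add_dotProduct, dotProduct_add, mulVec_dotProduct_eq_dotProduct_transpose_mulVec,
    hP.eq, (isSymm_one.sub hP).eq, mulVec_mulVec, hP'.eq, hP'.one_sub.eq, hP'.mul_one_sub_self,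
    hP'.one_sub_mul_self, zero_mulVec, dotProduct_zero, add_zero, zero_add]

theorem dotProduct_mulVec_add_dotProduct_one_sub_mulVec (P : Matrix n n R) (x y : n → R) :
    x ⬝ᵥ (P *ᵥ y) + x ⬝ᵥ ((1 - P) *ᵥ y) = x ⬝ᵥ y := by
  rw [← dotProduct_add, ← add_mulVec, add_sub_cancel, one_mulVec]

theorem partialSwap_snd_dotProduct_fst (hP : P.IsSymm) (hP' : IsIdempotentElem P)
    (q : (n → R) × (n → R)) :
    (partialSwap P q).2 ⬝ᵥ (partialSwap P q).1 = q.2 ⬝ᵥ q.1 :=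
  calc (partialSwap P q).2 ⬝ᵥ (partialSwap P q).1
      = q.2 ⬝ᵥ (P *ᵥ q.1) + q.1 ⬝ᵥ ((1 - P) *ᵥ q.2) :=
        mulVec_add_one_sub_mulVec_dotProduct hP hP' _ _ _ _
    _ = q.2 ⬝ᵥ (P *ᵥ q.1) + q.2 ⬝ᵥ ((1 - P) *ᵥ q.1) := by
        rw [dotProduct_comm q.1, mulVec_dotProduct_eq_dotProduct_transpose_mulVec,
          (isSymm_one.sub hP).eq]
    _ = q.2 ⬝ᵥ q.1 := dotProduct_mulVec_add_dotProduct_one_sub_mulVec P _ _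

theorem partialSwap_dotProduct_self_add (hP : P.IsSymm) (hP' : IsIdempotentElem P)
    (q : (n → R) × (n → R)) :
    (partialSwap P q).1 ⬝ᵥ (partialSwap P q).1 + (partialSwap P q).2 ⬝ᵥ (partialSwap P q).2 =
      q.1 ⬝ᵥ q.1 + q.2 ⬝ᵥ q.2 := by
  simp only [partialSwap, mulVec_add_one_sub_mulVec_dotProduct hP hP']
  rw [← dotProduct_mulVec_add_dotProduct_one_sub_mulVec P q.1 q.1,
    ← dotProduct_mulVec_add_dotProduct_one_sub_mulVec P q.2 q.2]
  ring

end Isometry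

variable [Field R] [LinearOrder R] [IsStrictOrderedRing R]

theorem min_div_two_mul_add_le {μ β a b s : R} (ha : 0 ≤ a) (hb : 0 ≤ b) (hμ : μ * a ≤ s)
    (hβ : β * b ≤ s) : min μ β / 2 * (a + b) ≤ s := by
  have hμa : min μ β * a ≤ μ * a := mul_le_mul_of_nonneg_right (min_le_left μ β) ha
  have hβb : min μ β * b ≤ β * b := mul_le_mul_of_nonneg_right (min_le_right μ β) hb
  linarith

theorem IsStronglyMonotone.partialInverse {μ β : R} (hμ : 0 ≤ μ) (hβ : 0 ≤ β)
    {A : Set ((n → R) × (n → R))} (hA : IsStronglyMonotone μ A) (hA' : IsCocoercive β A)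
    {P : Matrix n n R} (hP : P.IsSymm) (hP' : IsIdempotentElem P) :
    IsStronglyMonotone (min μ β / 2) (partialInverse P A) := by
  have hc : 0 ≤ min μ β / 2 := div_nonneg (le_min hμ hβ) zero_le_two
  rintro _ ⟨p, hp, rfl⟩ _ ⟨q, hq, rfl⟩
  rw [← Prod.fst_sub, ← Prod.snd_sub, ← partialSwap_sub,
    partialSwap_snd_dotProduct_fst hP hP']
  calc min μ β / 2 * ((partialSwap P (p - q)).1 ⬝ᵥ (partialSwap P (p - q)).1)
      ≤ min μ β / 2 * ((partialSwap P (p - q)).1 ⬝ᵥ (partialSwap P (p - q)).1 +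
          (partialSwap P (p - q)).2 ⬝ᵥ (partialSwap P (p - q)).2) :=
        mul_le_mul_of_nonneg_left (le_add_of_nonneg_right (dotProduct_self_nonneg_s13 _)) hc
    _ = min μ β / 2 * ((p - q).1 ⬝ᵥ (p - q).1 + (p - q).2 ⬝ᵥ (p - q).2) := by
        rw [partialSwap_dotProduct_self_add hP hP']
    _ ≤ (p - q).2 ⬝ᵥ (p - q).1 :=
        min_div_two_mul_add_le (dotProduct_self_nonneg_s13 _) (dotProduct_self_nonneg_s13 _)
          (hA p hp q hq) (hA' p hp q hq)

theorem partial_inverse_strongly_monotone_general {m : Type*} [Fintype m] [DecidableEq m]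
    {μ β : R} (hμ : 0 ≤ μ) (hβ : 0 ≤ β) {A : Set ((n → R) × (n → R))}
    (hA : IsStronglyMonotone μ A) (hA' : IsCocoercive β A)
    {P : Matrix n n R} (hP : P.IsSymm) (hP' : IsIdempotentElem P)
    {Q : Matrix m n R} (hQ : Q * Qᵀ = 1)
    {H : Matrix m m R} (hH : ∀ w, (H *ᵥ w) ⬝ᵥ w ≤ 0) :
    IsStronglyMonotone (min μ β / 2) (congrSub Q H (partialInverse P A)) :=
  (hA.partialInverse hμ hβ hA' hP hP').congrSub hQ hH

end PartialInverse

theorem mul_transpose_eq_one_of_perm {n R : Type*} [Fintype n] [DecidableEq n]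
    [NonAssocSemiring R] {Q : Matrix n n R} {σ : Equiv.Perm n}
    (hQ : ∀ a b, Q a b = if b = σ a then 1 else 0) : Q * Qᵀ = 1 := by
  have hQσ : Q = σ.permMatrix R := by
    ext a b
    simp [hQ, PEquiv.toMatrix_apply, Equiv.toPEquiv_apply, eq_comm]
  rw [hQσ, transpose_permMatrix, ← permMatrix_mul, inv_mul_cancel, permMatrix_one]

/-- **Strong monotonicity of the partial inverse of a strongly monotone,
cocoercive operator (intermediate claim in the proof of Lemma B.5).**
Here `K` is encoded by its orthogonal projection matrix `P` (symmetric,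
idempotent), `Q` is a permutation matrix, `H₀` is skew-symmetric, and the
operator `T(w) = { Q u − H₀ w : u ∈ 𝔸_K(Qᵀ w) }` is described through its
graph: `(w, b) ∈ gra T` iff there is `(x, y) ∈ gra 𝔸` with
`Qᵀ w = P x + (I − P) y` and `b = Q (P y + (I − P) x) − H₀ w`. -/
theorem partial_inverse_strongly_monotone {d : ℕ} (μ β : ℝ) (hμ : 0 < μ) (hβ : 0 < β)
    (GA : Set ((Fin d → ℝ) × (Fin d → ℝ)))
    (hstrong : ∀ q₁ ∈ GA, ∀ q₂ ∈ GA,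
      μ * ((q₁.1 - q₂.1) ⬝ᵥ (q₁.1 - q₂.1)) ≤ (q₁.2 - q₂.2) ⬝ᵥ (q₁.1 - q₂.1))
    (hcocoercive : ∀ q₁ ∈ GA, ∀ q₂ ∈ GA,
      β * ((q₁.2 - q₂.2) ⬝ᵥ (q₁.2 - q₂.2)) ≤ (q₁.2 - q₂.2) ⬝ᵥ (q₁.1 - q₂.1))
    (P : Matrix (Fin d) (Fin d) ℝ) (hPsymm : P.transpose = P) (hPidem : P * P = P)
    (Q : Matrix (Fin d) (Fin d) ℝ)
    (hQ : ∃ ep : Equiv.Perm (Fin d), ∀ a b, Q a b = if b = ep a then 1 else 0)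
    (H0 : Matrix (Fin d) (Fin d) ℝ) (hH0 : H0.transpose = -H0) :
    ∀ w₁ b₁ w₂ b₂ : Fin d → ℝ,
      (∃ q₁ ∈ GA, Q.transpose.mulVec w₁ = P.mulVec q₁.1 + (1 - P).mulVec q₁.2 ∧
        b₁ = Q.mulVec (P.mulVec q₁.2 + (1 - P).mulVec q₁.1) - H0.mulVec w₁) →
      (∃ q₂ ∈ GA, Q.transpose.mulVec w₂ = P.mulVec q₂.1 + (1 - P).mulVec q₂.2 ∧
        b₂ = Q.mulVec (P.mulVec q₂.2 + (1 - P).mulVec q₂.1) - H0.mulVec w₂) →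
      min μ β / 2 * ((w₁ - w₂) ⬝ᵥ (w₁ - w₂)) ≤ (b₁ - b₂) ⬝ᵥ (w₁ - w₂) := by
  rintro w₁ _ w₂ _ ⟨q₁, hq₁, hw₁, rfl⟩ ⟨q₂, hq₂, hw₂, rfl⟩
  obtain ⟨σ, hσ⟩ := hQ
  exact partial_inverse_strongly_monotone_general hμ.le hβ.le hstrong hcocoercive hPsymm hPidem
    (mul_transpose_eq_one_of_perm hσ) (fun w ↦ (mulVec_dotProduct_self_eq_zero hH0 w).le)
    _ ⟨w₁, _, ⟨q₁, hq₁, Prod.ext hw₁.symm rfl⟩, rfl⟩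
    _ ⟨w₂, _, ⟨q₂, hq₂, Prod.ext hw₂.symm rfl⟩, rfl⟩
end

section
/- Sufficient dissipativity implies convergence of the discrete iterates (Lemma 1 / Lemma G.1). Let f: ℝ^m → ℝ ∪ {∞} be closed, strictly convex, and proper, and let (x⋆, y⋆) ∈ ℝ^m × ℝ^m satisfy y⋆ ∈ ∂f(x⋆). Let D_𝒞 and D_ℒ be diagonal matrices with strictly positive diagonal entries, let v_𝒞⋆ and i_ℒ⋆ be fixed vectors of the corresponding dimensions, and let (v_𝒞^k, i_ℒ^k, x^k, y^k), k = 1, 2, …, be a sequence with y^k ∈ ∂f(x^k) for all k. Define the energy ℰ_k = ½‖v_𝒞^k − v_𝒞⋆‖²_{D_𝒞} + ½‖i_ℒ^k − i_ℒ⋆‖²_{D_ℒ}. If there exists η > 0 such that ℰ_{k+1} − ℰ_k + η ⟨x^k − x⋆, y^k − y⋆⟩ ≤ 0 for all k = 1, 2, …, then x^k → x⋆ as k → ∞. -/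
open Matrix

/-- Strict convexity of an extended-real-valued function on its domain. -/
def EStrictConvex {m : ℕ} (f : (Fin m → ℝ) → EReal) : Prop :=
  ∀ x z : Fin m → ℝ, x ≠ z → f x ≠ ⊤ → f z ≠ ⊤ →
    ∀ a b : ℝ, 0 < a → 0 < b → a + b = 1 →
      f (a • x + b • z) < (a : EReal) * f x + (b : EReal) * f z

/-!
Tilting `f` by `-⟪ystar, ·⟫` makes `xstar` its strict minimizer. The subgradient inequality at `x k`
bounds the excess of the tilted function at `x k` over its minimum by `⟪x k - xstar, y k - ystar⟫`,
and this pairing tends to zero because it is paid for by a decrease of the energy. Hence `x` is a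
minimizing sequence. A minimizing sequence of a lower semicontinuous strictly convex function
converges to the minimizer: by convexity along rays, the function is at least its minimum over a
sphere around the minimizer everywhere outside that sphere, and by compactness and strictness this
minimum over the sphere is larger than the global one.
-/

open Filter Topology

section Minimization

variable {V : Type*} [NormedAddCommGroup V] [NormedSpace ℝ V]

theorem exists_mem_segment_inter_sphere {x z : V} {ε : ℝ} (hε : 0 < ε) (hz : ε ≤ dist z x) :
    ∃ w ∈ segment ℝ x z, w ∈ Metric.sphere x ε := by
  have hpos : 0 < dist z x := hε.trans_le hz
  refine ⟨AffineMap.lineMap x z (ε / dist z x),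
    lineMap_mem_segment ℝ x z ⟨by positivity, (div_le_one hpos).2 hz⟩, ?_⟩
  rw [Metric.mem_sphere, dist_lineMap_left, dist_comm x z, Real.norm_of_nonneg (by positivity),
    div_mul_cancel₀ ε hpos.ne']

theorem tendsto_of_tendsto_strict_minimum [ProperSpace V] {β : Type*} [LinearOrder β]
    [TopologicalSpace β] [ClosedIciTopology β] {g : V → β} {x₀ : V} (hlsc : LowerSemicontinuous g)
    (hmin : ∀ z ≠ x₀, g x₀ < g z) (hray : ∀ z, ∀ w ∈ segment ℝ x₀ z, g w ≤ g z)
    {ι : Type*} {l : Filter ι} {u : ι → V} (hu : Tendsto (g ∘ u) l (𝓝 (g x₀))) :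
    Tendsto u l (𝓝 x₀) := by
  rw [Metric.tendsto_nhds]
  intro ε hε
  obtain hempty | hne := (Metric.sphere x₀ ε).eq_empty_or_nonempty
  · refine .of_forall fun i => not_le.1 fun hi => ?_
    obtain ⟨w, -, hw⟩ := exists_mem_segment_inter_sphere hε hi
    exact Set.notMem_empty w (hempty ▸ hw)
  · obtain ⟨w₀, hw₀, hw₀min⟩ :=
      (hlsc.lowerSemicontinuousOn _).exists_isMinOn hne (isCompact_sphere x₀ ε)
    have hlt : g x₀ < g w₀ := hmin w₀ (Metric.ne_of_mem_sphere hw₀ hε.ne')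
    filter_upwards [hu.eventually_lt_const hlt] with i hi
    by_contra! hfar
    obtain ⟨w, hseg, hw⟩ := exists_mem_segment_inter_sphere hε hfar
    exact hi.not_ge ((hw₀min hw).trans (hray _ w hseg))

end Minimization

theorem tendsto_sub_succ_of_antitone {E : ℕ → ℝ} (hE : Antitone E)
    (hbdd : BddBelow (Set.range E)) : Tendsto (fun k => E k - E (k + 1)) atTop (𝓝 0) := by
  have hlim := tendsto_atTop_ciInf hE hbdd
  have hlim' := hlim.comp (tendsto_add_atTop_nat 1)
  simpa only [sub_self, Function.comp_apply] using hlim.sub hlim'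

theorem tendsto_zero_of_dissipation {E d : ℕ → ℝ} {η : ℝ} (hη : 0 < η)
    (hbdd : BddBelow (Set.range E)) (hd : ∀ k, 0 ≤ d k)
    (hdiss : ∀ k, E (k + 1) - E k + η * d k ≤ 0) : Tendsto d atTop (𝓝 0) := by
  have hE : Antitone E := antitone_nat_of_succ_le fun k => by
    linarith [hdiss k, mul_nonneg hη.le (hd k)]
  have hdrop : Tendsto (fun k => (E k - E (k + 1)) / η) atTop (𝓝 0) := by
    simpa only [zero_div] using (tendsto_sub_succ_of_antitone hE hbdd).div_const η
  refine squeeze_zero hd (fun k => ?_) hdrop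
  rw [le_div_iff₀' hη]
  linarith [hdiss k]

section StrictConvexity

variable {m : ℕ} {g : (Fin m → ℝ) → EReal} {x z w : Fin m → ℝ}

theorem EStrictConvex.lt_of_mem_openSegment (hg : EStrictConvex g) (hxz : x ≠ z)
    (hle : g x ≤ g z) (hz : g z ≠ ⊤) (hw : w ∈ openSegment ℝ x z) : g w < g z := by
  obtain ⟨a, b, ha, hb, hab, rfl⟩ := hw
  have ha' : (0 : EReal) ≤ a := EReal.coe_nonneg.2 ha.le
  have hb' : (0 : EReal) ≤ b := EReal.coe_nonneg.2 hb.le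
  calc g (a • x + b • z) < a * g x + b * g z :=
        hg x z hxz (ne_top_of_le_ne_top hz hle) hz a b ha hb hab
    _ ≤ a * g z + b * g z := by gcongr
    _ = g z := by
        rw [← EReal.right_distrib_of_nonneg ha' hb', ← EReal.coe_add, hab, EReal.coe_one, one_mul]

theorem EStrictConvex.lt_of_forall_le (hg : EStrictConvex g) (hmin : ∀ z, g x ≤ g z) (hx : g x ≠ ⊤)
    (hzx : z ≠ x) : g x < g z := by
  refine lt_of_not_ge fun hle => ?_
  have hmid : g (midpoint ℝ z x) < g x :=
    hg.lt_of_mem_openSegment hzx hle hx (midpoint_mem_openSegment z x)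
  exact hmid.not_ge (hmin _)

theorem EStrictConvex.le_of_mem_segment (hg : EStrictConvex g) (hle : g x ≤ g z)
    (hw : w ∈ segment ℝ x z) : g w ≤ g z := by
  obtain hz | hz := eq_or_ne (g z) ⊤
  · exact hz ▸ le_top
  obtain rfl | hxz := eq_or_ne x z
  · rw [segment_same, Set.mem_singleton_iff] at hw
    exact hw ▸ le_rfl
  rw [← insert_endpoints_openSegment] at hw
  obtain rfl | rfl | hw := hw
  · exact hle
  · exact le_rfl
  · exact (hg.lt_of_mem_openSegment hxz hle hz hw).le

theorem EStrictConvex.tendsto_of_tendsto_minimum (hg : EStrictConvex g)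
    (hlsc : LowerSemicontinuous g) (hmin : ∀ z, g x ≤ g z) (hx : g x ≠ ⊤) {ι : Type*}
    {l : Filter ι} {u : ι → Fin m → ℝ} (hu : Tendsto (g ∘ u) l (𝓝 (g x))) :
    Tendsto u l (𝓝 x) :=
  tendsto_of_tendsto_strict_minimum hlsc (fun _ hz => hg.lt_of_forall_le hmin hx hz)
    (fun z _ hw => hg.le_of_mem_segment (hmin z) hw) hu

end StrictConvexity

section Tilt

variable {m : ℕ} {f : (Fin m → ℝ) → EReal} {x y : Fin m → ℝ}

/-- The tilt `f - ⟪y, ·⟫` of `f` by the linear form `y`, whose minimizers are the points at which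
`y` is a subgradient of `f`. The negation is taken in `ℝ`, so that the real term is merely added
in `EReal`. -/
noncomputable def linearTilt (f : (Fin m → ℝ) → EReal) (y z : Fin m → ℝ) : EReal :=
  f z + ((-(y ⬝ᵥ z) : ℝ) : EReal)

theorem linearTilt_add_coe (f : (Fin m → ℝ) → EReal) (y z : Fin m → ℝ) (r : ℝ) :
    linearTilt f y z + (r : EReal) = f z + ((r - y ⬝ᵥ z : ℝ) : EReal) := by
  rw [linearTilt, add_assoc, ← EReal.coe_add, neg_add_eq_sub]

theorem linearTilt_ne_top_iff : linearTilt f y x ≠ ⊤ ↔ f x ≠ ⊤ :=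
  EReal.add_ne_top_iff_ne_top_left (EReal.coe_ne_bot _) (EReal.coe_ne_top _)

theorem linearTilt_ne_bot_iff : linearTilt f y x ≠ ⊥ ↔ f x ≠ ⊥ :=
  EReal.add_ne_bot_iff.trans (and_iff_left (EReal.coe_ne_bot _))

theorem lowerSemicontinuous_linearTilt (hf : LowerSemicontinuous f) (y : Fin m → ℝ) :
    LowerSemicontinuous (linearTilt f y) := by
  have hlin : Continuous fun z : Fin m → ℝ => ((-(y ⬝ᵥ z) : ℝ) : EReal) :=
    continuous_coe_real_ereal.comp (continuous_const.dotProduct continuous_id).neg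
  exact hf.add' hlin.lowerSemicontinuous fun z =>
    EReal.continuousAt_add (.inr (EReal.coe_ne_bot _)) (.inr (EReal.coe_ne_top _))

theorem eStrictConvex_linearTilt (hf : EStrictConvex f) (y : Fin m → ℝ) :
    EStrictConvex (linearTilt f y) := by
  intro x z hxz hx hz a b ha hb hab
  rw [linearTilt_ne_top_iff] at hx hz
  have hlin : -(y ⬝ᵥ (a • x + b • z)) = a * -(y ⬝ᵥ x) + b * -(y ⬝ᵥ z) := by
    simp only [dotProduct_add, dotProduct_smul, smul_eq_mul]
    ring
  have hdistrib {c : ℝ} (hc : 0 < c) (u : EReal) (r : ℝ) :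
      (c : EReal) * (u + r) = c * u + ((c * r : ℝ) : EReal) := by
    rw [EReal.left_distrib_of_nonneg_of_ne_top (EReal.coe_nonneg.2 hc.le) (EReal.coe_ne_top c),
      EReal.coe_mul]
  simp only [linearTilt]
  rw [hlin, hdistrib ha, hdistrib hb, add_add_add_comm, ← EReal.coe_add]
  exact EReal.add_lt_add_right_coe (hf x z hxz hx hz a b ha hb hab) _

theorem eSubgradAt_iff_linearTilt_le :
    ESubgradAt f y x ↔ ∀ z, linearTilt f y x ≤ linearTilt f y z := by
  refine forall_congr' fun z => ?_
  have hcancel : linearTilt f y z + ((y ⬝ᵥ z : ℝ) : EReal) = f z := by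
    rw [linearTilt_add_coe, sub_self, EReal.coe_zero, add_zero]
  rw [← (EReal.addLECancellable_coe (y ⬝ᵥ z)).add_le_add_iff_right (b := linearTilt f y x),
    linearTilt_add_coe, hcancel, dotProduct_sub]

end Tilt

section Subgradient

variable {m : ℕ} {f : (Fin m → ℝ) → EReal} {x y x' y' : Fin m → ℝ}

theorem ESubgradAt.ne_top (h : ESubgradAt f y x) (hproper : ∃ z, f z ≠ ⊤) : f x ≠ ⊤ := by
  obtain ⟨z, hz⟩ := hproper
  intro hx
  have hle := h z
  rw [hx, EReal.top_add_coe, top_le_iff] at hle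
  exact hz hle

theorem ESubgradAt.linearTilt_le_add_pairing (h : ESubgradAt f y x) (x' y' : Fin m → ℝ) :
    linearTilt f y' x ≤ linearTilt f y' x' + (((x - x') ⬝ᵥ (y - y') : ℝ) : EReal) := by
  have hretilt : linearTilt f y' x = linearTilt f y x + (((y - y') ⬝ᵥ x : ℝ) : EReal) := by
    rw [linearTilt_add_coe, sub_dotProduct, sub_sub_cancel_left, linearTilt]
  have hpair : (y - y') ⬝ᵥ x - y ⬝ᵥ x' = (x - x') ⬝ᵥ (y - y') - y' ⬝ᵥ x' := by
    rw [dotProduct_comm (x - x'), dotProduct_sub, sub_dotProduct y y' x']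
    ring
  calc linearTilt f y' x = linearTilt f y x + (((y - y') ⬝ᵥ x : ℝ) : EReal) := hretilt
    _ ≤ linearTilt f y x' + (((y - y') ⬝ᵥ x : ℝ) : EReal) := by
        gcongr
        exact eSubgradAt_iff_linearTilt_le.1 h x'
    _ = linearTilt f y' x' + (((x - x') ⬝ᵥ (y - y') : ℝ) : EReal) := by
        rw [linearTilt_add_coe, linearTilt_add_coe, hpair]

theorem ESubgradAt.pairing_nonneg (h : ESubgradAt f y x) (h' : ESubgradAt f y' x')
    (htop : f x' ≠ ⊤) (hbot : f x' ≠ ⊥) : 0 ≤ (x - x') ⬝ᵥ (y - y') := by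
  have hle : linearTilt f y' x' ≤ linearTilt f y' x' + (((x - x') ⬝ᵥ (y - y') : ℝ) : EReal) :=
    (eSubgradAt_iff_linearTilt_le.1 h' x).trans (h.linearTilt_le_add_pairing x' y')
  lift linearTilt f y' x' to ℝ using
    ⟨linearTilt_ne_top_iff.2 htop, linearTilt_ne_bot_iff.2 hbot⟩ with F
  rw [← EReal.coe_add, EReal.coe_le_coe_iff] at hle
  exact (le_add_iff_nonneg_right F).1 hle

theorem tendsto_linearTilt_of_tendsto_pairing {xstar ystar : Fin m → ℝ}
    (hstar : ESubgradAt f ystar xstar) {ι : Type*} {l : Filter ι} {x y : ι → Fin m → ℝ}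
    (hsub : ∀ i, ESubgradAt f (y i) (x i))
    (hpair : Tendsto (fun i => (x i - xstar) ⬝ᵥ (y i - ystar)) l (𝓝 0)) :
    Tendsto (linearTilt f ystar ∘ x) l (𝓝 (linearTilt f ystar xstar)) := by
  have hupper : Tendsto (fun i => linearTilt f ystar xstar +
      (((x i - xstar) ⬝ᵥ (y i - ystar) : ℝ) : EReal)) l (𝓝 (linearTilt f ystar xstar)) := by
    have hadd := (EReal.continuousAt_add (p := (linearTilt f ystar xstar, ((0 : ℝ) : EReal)))
      (.inr (EReal.coe_ne_bot 0)) (.inr (EReal.coe_ne_top 0))).tendsto.comp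
        (tendsto_const_nhds.prodMk_nhds (EReal.tendsto_coe.2 hpair))
    simpa only [Function.comp_def, EReal.coe_zero, add_zero] using hadd
  exact tendsto_of_tendsto_of_tendsto_of_le_of_le tendsto_const_nhds hupper
    (fun i => eSubgradAt_iff_linearTilt_le.1 hstar (x i))
    (fun i => (hsub i).linearTilt_le_add_pairing xstar ystar)

end Subgradient

theorem sufficient_dissipativity_convergence_general {m : ℕ} {f : (Fin m → ℝ) → EReal}
    (hclosed : LowerSemicontinuous f) (hstrict : EStrictConvex f) {xstar ystar : Fin m → ℝ}
    (hstar : ESubgradAt f ystar xstar) (htop : f xstar ≠ ⊤) (hbot : f xstar ≠ ⊥)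
    {E : ℕ → ℝ} (hE : BddBelow (Set.range E)) {x y : ℕ → Fin m → ℝ}
    (hsub : ∀ k, ESubgradAt f (y k) (x k)) {η : ℝ} (hη : 0 < η)
    (hdiss : ∀ k, E (k + 1) - E k + η * ((x k - xstar) ⬝ᵥ (y k - ystar)) ≤ 0) :
    Tendsto x atTop (𝓝 xstar) := by
  have hpair : Tendsto (fun k => (x k - xstar) ⬝ᵥ (y k - ystar)) atTop (𝓝 0) :=
    tendsto_zero_of_dissipation hη hE (fun k => (hsub k).pairing_nonneg hstar htop hbot) hdiss
  exact (eStrictConvex_linearTilt hstrict ystar).tendsto_of_tendsto_minimum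
    (lowerSemicontinuous_linearTilt hclosed ystar) (eSubgradAt_iff_linearTilt_le.1 hstar)
    (linearTilt_ne_top_iff.2 htop) (tendsto_linearTilt_of_tendsto_pairing hstar hsub hpair)

theorem weighted_sq_dist_nonneg {n : ℕ} {d : Fin n → ℝ} (hd : ∀ j, 0 ≤ d j) (u v : Fin n → ℝ) :
    0 ≤ ∑ j, d j * (u j - v j) ^ 2 :=
  Finset.sum_nonneg fun j _ => mul_nonneg (hd j) (sq_nonneg _)

/-- **Sufficient dissipativity implies convergence of the discrete iterates
(Lemma 1 / Lemma G.1).**  If the discrete energy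
`ℰ_k = ½‖v_𝒞^k − v_𝒞⋆‖²_{D_𝒞} + ½‖i_ℒ^k − i_ℒ⋆‖²_{D_ℒ}` satisfies
`ℰ_{k+1} − ℰ_k + η⟨x^k − x⋆, y^k − y⋆⟩ ≤ 0` for some `η > 0` and all `k ≥ 1`,
with `y^k ∈ ∂f(x^k)` and `f` closed, strictly convex, proper, then `x^k → x⋆`. -/
theorem sufficient_dissipativity_convergence {m nc nl : ℕ}
    (f : (Fin m → ℝ) → EReal)
    (hclosed : LowerSemicontinuous f)
    (hstrict : EStrictConvex f)
    (hproper : ∃ z, f z ≠ ⊤) (hnb : ∀ z, f z ≠ ⊥)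
    (xstar ystar : Fin m → ℝ) (hstar : ESubgradAt f ystar xstar)
    (dC : Fin nc → ℝ) (hdC : ∀ j, 0 < dC j)
    (dL : Fin nl → ℝ) (hdL : ∀ j, 0 < dL j)
    (vCstar : Fin nc → ℝ) (iLstar : Fin nl → ℝ)
    (vC : ℕ → Fin nc → ℝ) (iL : ℕ → Fin nl → ℝ)
    (x y : ℕ → Fin m → ℝ)
    (hsub : ∀ k, ESubgradAt f (y k) (x k))
    (η : ℝ) (hη : 0 < η)
    (hdiss : ∀ k : ℕ, 1 ≤ k →
      ((1 / 2) * ∑ j, dC j * (vC (k + 1) j - vCstar j) ^ 2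
        + (1 / 2) * ∑ j, dL j * (iL (k + 1) j - iLstar j) ^ 2)
      - ((1 / 2) * ∑ j, dC j * (vC k j - vCstar j) ^ 2
        + (1 / 2) * ∑ j, dL j * (iL k j - iLstar j) ^ 2)
      + η * ((x k - xstar) ⬝ᵥ (y k - ystar)) ≤ 0) :
    Filter.Tendsto x Filter.atTop (nhds xstar) := by
  have hE : BddBelow (Set.range fun k =>
      (1 / 2) * ∑ j, dC j * (vC (k + 1) j - vCstar j) ^ 2
        + (1 / 2) * ∑ j, dL j * (iL (k + 1) j - iLstar j) ^ 2) := by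
    refine ⟨0, Set.forall_mem_range.2 fun k => ?_⟩
    linarith [weighted_sq_dist_nonneg (fun j => (hdC j).le) (vC (k + 1)) vCstar,
      weighted_sq_dist_nonneg (fun j => (hdL j).le) (iL (k + 1)) iLstar]
  refine (Filter.tendsto_add_atTop_iff_nat 1).1 ?_
  exact sufficient_dissipativity_convergence_general hclosed hstrict hstar (hstar.ne_top hproper)
    (hnb xstar) hE (fun k => hsub (k + 1)) hη fun k => hdiss (k + 1) (Nat.le_add_left 1 k)
end

section
/- The Nesterov-acceleration circuit relations imply the Nesterov ODE. Let f: ℝ^m → ℝ be convex and differentiable, and let R, L, C > 0. Let x, v_C, i_L: [0,∞) → ℝ^m be curves such that v_C and i_L are differentiable, the map t ↦ ∇f(x(t)) is differentiable, and for all t ≥ 0: (d/dt) i_L(t) = (1/L)( v_C(t) − x(t) + R ∇f(x(t)) ), (d/dt) v_C(t) = −(1/C) ∇f(x(t)), and ∇f(x(t)) = i_L(t) + (1/R)( v_C(t) − x(t) + R ∇f(x(t)) ). Then x(t) = v_C(t) + R i_L(t) for all t, x is twice differentiable, and x'' + (R/L) x' + (1/C − R²/L) (d/dt)(∇f(x(t)))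 + (R/(LC)) ∇f(x(t)) = 0 for all t. In particular, if μ > 0 and L = 1/(8 μ √μ), C = 2√μ, R = √(L/C) = 1/(4μ), then x'' + 2√μ x' + ∇f(x) = 0. -/
open Matrix

/-! Kirchhoff's current law says that the inductor carries the voltage `R (y - i_L)`, where
`y = ∇f(x)`. Hence `x = v_C + R i_L`, and `x' = (R² / L) (y - i_L) - y / C` no longer involves
`v_C`. Differentiating once more, the remaining `i_L'` is eliminated with
`R i_L' = x' + y / C`. -/

/-- The relations of the Nesterov-acceleration circuit on the time set `s`. The curve `x` is the
terminal potential and `y` the current drawn there by the nonlinear element, `y t = ∇f (x t)` in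
the optimization setting, so that `x t - R • y t` is the potential after the negative resistor.
The three parameters are required to be nonzero because the relations divide by them. -/
structure IsNesterovCircuit {𝕜 E : Type*} [NontriviallyNormedField 𝕜] [NormedAddCommGroup E]
    [NormedSpace 𝕜 E] (R L C : 𝕜) (s : Set 𝕜) (x y vC iL : 𝕜 → E) : Prop where
  resistance_ne_zero : R ≠ 0
  inductance_ne_zero : L ≠ 0
  capacitance_ne_zero : C ≠ 0
  inductor : ∀ t ∈ s, HasDerivWithinAt iL ((1 / L) • (vC t - x t + R • y t)) s t
  capacitor : ∀ t ∈ s, HasDerivWithinAt vC (-(1 / C) • y t) s t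
  current_law : ∀ t ∈ s, y t = iL t + (1 / R) • (vC t - x t + R • y t)

/-- The velocity `x'` of the terminal potential of a Nesterov circuit, expressed through the
terminal current `y` and the inductor current `iL` alone. -/
def nesterovVelocity {𝕜 E : Type*} [Field 𝕜] [AddCommGroup E] [Module 𝕜 E]
    (R L C : 𝕜) (y iL : 𝕜 → E) (t : 𝕜) : E :=
  (R ^ 2 / L) • (y t - iL t) - (1 / C) • y t

namespace IsNesterovCircuit

variable {𝕜 E : Type*} [NontriviallyNormedField 𝕜] [NormedAddCommGroup E] [NormedSpace 𝕜 E]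
  {R L C : 𝕜} {s : Set 𝕜} {x y vC iL : 𝕜 → E} {t : 𝕜}

theorem inductor_voltage_eq (h : IsNesterovCircuit R L C s x y vC iL) (ht : t ∈ s) :
    vC t - x t + R • y t = R • (y t - iL t) := by
  have hcurrent : y t - iL t = (1 / R) • (vC t - x t + R • y t) :=
    sub_eq_of_eq_add' (h.current_law t ht)
  rw [hcurrent, smul_smul, mul_one_div_cancel h.resistance_ne_zero, one_smul]

theorem potential_eq (h : IsNesterovCircuit R L C s x y vC iL) (ht : t ∈ s) :
    x t = vC t + R • iL t := by
  linear_combination (norm := module) -h.inductor_voltage_eq ht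

theorem hasDerivWithinAt_inductor_current (h : IsNesterovCircuit R L C s x y vC iL)
    (ht : t ∈ s) : HasDerivWithinAt iL ((R / L) • (y t - iL t)) s t := by
  convert h.inductor t ht using 1
  rw [h.inductor_voltage_eq ht, smul_smul, one_div_mul_eq_div]

theorem hasDerivWithinAt_potential (h : IsNesterovCircuit R L C s x y vC iL) (ht : t ∈ s) :
    HasDerivWithinAt x (nesterovVelocity R L C y iL t) s t := by
  have hsum := (h.capacitor t ht).add ((h.hasDerivWithinAt_inductor_current ht).const_smul R)
  refine (hsum.congr (fun _ hu => h.potential_eq hu) (h.potential_eq ht)).congr_deriv ?_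
  unfold nesterovVelocity
  module

theorem hasDerivWithinAt_velocity (h : IsNesterovCircuit R L C s x y vC iL) (ht : t ∈ s)
    {y' : E} (hy : HasDerivWithinAt y y' s t) :
    HasDerivWithinAt (nesterovVelocity R L C y iL)
      (-((R / L) • nesterovVelocity R L C y iL t + (1 / C - R ^ 2 / L) • y'
        + (R / (L * C)) • y t)) s t := by
  have hdiff := ((hy.sub (h.hasDerivWithinAt_inductor_current ht)).const_smul (R ^ 2 / L)).sub
    (hy.const_smul (1 / C))
  refine hdiff.congr_deriv ?_
  unfold nesterovVelocity
  module

end IsNesterovCircuit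

theorem nesterov_coefficients_eq {μ R L C : ℝ} (hμ : 0 < μ) (hL : L = 1 / (8 * μ * √μ))
    (hC : C = 2 * √μ) (hR : R = 1 / (4 * μ)) :
    R / L = 2 * √μ ∧ 1 / C - R ^ 2 / L = 0 ∧ R / (L * C) = 1 := by
  obtain ⟨r, hr, rfl⟩ : ∃ r : ℝ, 0 < r ∧ μ = r ^ 2 :=
    ⟨√μ, Real.sqrt_pos.2 hμ, (Real.sq_sqrt hμ.le).symm⟩
  rw [Real.sqrt_sq hr.le] at hL hC ⊢
  subst hL hC hR
  refine ⟨?_, ?_, ?_⟩ <;> field_simp <;> norm_num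

theorem nesterov_circuit_ode_general {E : Type*} [NormedAddCommGroup E] [NormedSpace ℝ E]
    {R L C : ℝ} {s : Set ℝ} {x y y' vC iL : ℝ → E} (h : IsNesterovCircuit R L C s x y vC iL)
    (hy : ∀ t ∈ s, HasDerivWithinAt y (y' t) s t) :
    (∀ t ∈ s, x t = vC t + R • iL t) ∧
    ∃ x' x'' : ℝ → E,
      (∀ t ∈ s, HasDerivWithinAt x (x' t) s t ∧ HasDerivWithinAt x' (x'' t) s t) ∧
      (∀ t ∈ s,
        x'' t + (R / L) • x' t + (1 / C - R ^ 2 / L) • y' t + (R / (L * C)) • y t = 0) ∧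
      ∀ μ : ℝ, (0 < μ ∧ L = 1 / (8 * μ * √μ) ∧ C = 2 * √μ ∧ R = 1 / (4 * μ)) →
        ∀ t ∈ s, x'' t + (2 * √μ) • x' t + y t = 0 := by
  let x' := nesterovVelocity R L C y iL
  let x'' := fun t =>
    -((R / L) • x' t + (1 / C - R ^ 2 / L) • y' t + (R / (L * C)) • y t)
  have hode : ∀ t ∈ s,
      x'' t + (R / L) • x' t + (1 / C - R ^ 2 / L) • y' t + (R / (L * C)) • y t = 0 :=
    fun t _ => by simp only [x'']; abel
  refine ⟨fun t ht => h.potential_eq ht, x', x'', fun t ht =>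
    ⟨h.hasDerivWithinAt_potential ht, h.hasDerivWithinAt_velocity ht (hy t ht)⟩, hode, ?_⟩
  rintro μ ⟨hμ, hL, hC, hR⟩ t ht
  obtain ⟨hdamping, hcorrection, hforce⟩ := nesterov_coefficients_eq hμ hL hC hR
  simpa only [hdamping, hcorrection, hforce, zero_smul, add_zero, one_smul] using hode t ht

/-- **The Nesterov-acceleration circuit relations imply the Nesterov ODE.**
If the curves satisfy the inductor relation, the capacitor relation, and
Kirchhoff's current law of the Nesterov circuit for all `t ≥ 0`, then
`x(t) = v_C(t) + R i_L(t)`, `x` is twice differentiable, and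
`x'' + (R/L) x' + (1/C − R²/L)(d/dt)(∇f(x)) + (R/(LC)) ∇f(x) = 0`.
In particular for `L = 1/(8μ√μ)`, `C = 2√μ`, `R = 1/(4μ)` one recovers
`x'' + 2√μ x' + ∇f(x) = 0`. -/
theorem nesterov_circuit_ode {m : ℕ} (μ R L C : ℝ) (hR : 0 < R) (hL : 0 < L) (hC : 0 < C)
    (f : (Fin m → ℝ) → ℝ) (g : (Fin m → ℝ) → Fin m → ℝ)
    (hconv : ConvexOn ℝ Set.univ f) (hgrad : HasGradient f g)
    (x vC iL : ℝ → Fin m → ℝ) (Gd : ℝ → Fin m → ℝ)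
    (hiL : ∀ t ∈ Set.Ici (0 : ℝ), ∀ k,
      HasDerivWithinAt (fun s => iL s k)
        ((1 / L) * (vC t k - x t k + R * g (x t) k)) (Set.Ici 0) t)
    (hvC : ∀ t ∈ Set.Ici (0 : ℝ), ∀ k,
      HasDerivWithinAt (fun s => vC s k) (-(1 / C) * g (x t) k) (Set.Ici 0) t)
    (hKCL : ∀ t ∈ Set.Ici (0 : ℝ), ∀ k,
      g (x t) k = iL t k + (1 / R) * (vC t k - x t k + R * g (x t) k))
    (hGd : ∀ t ∈ Set.Ici (0 : ℝ), ∀ k,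
      HasDerivWithinAt (fun s => g (x s) k) (Gd t k) (Set.Ici 0) t) :
    (∀ t ∈ Set.Ici (0 : ℝ), x t = vC t + R • iL t) ∧
    ∃ x' x'' : ℝ → Fin m → ℝ,
      (∀ t ∈ Set.Ici (0 : ℝ), ∀ k,
        HasDerivWithinAt (fun s => x s k) (x' t k) (Set.Ici 0) t ∧
        HasDerivWithinAt (fun s => x' s k) (x'' t k) (Set.Ici 0) t) ∧
      (∀ t ∈ Set.Ici (0 : ℝ),
        x'' t + (R / L) • x' t + (1 / C - R ^ 2 / L) • Gd t
          + (R / (L * C)) • g (x t) = 0) ∧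
      ((0 < μ ∧ L = 1 / (8 * μ * Real.sqrt μ) ∧ C = 2 * Real.sqrt μ ∧ R = 1 / (4 * μ)) →
        ∀ t ∈ Set.Ici (0 : ℝ),
          x'' t + (2 * Real.sqrt μ) • x' t + g (x t) = 0) := by
  obtain ⟨hx, x', x'', hderiv, hode, hspecial⟩ := nesterov_circuit_ode_general
    (y := fun t => g (x t))
    ⟨hR.ne', hL.ne', hC.ne', fun t ht => hasDerivWithinAt_pi.2 (hiL t ht),
      fun t ht => hasDerivWithinAt_pi.2 (hvC t ht), fun t ht => funext (hKCL t ht)⟩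
    fun t ht => hasDerivWithinAt_pi.2 (hGd t ht)
  exact ⟨hx, x', x'', fun t ht k => ⟨hasDerivWithinAt_pi.1 (hderiv t ht).1 k,
    hasDerivWithinAt_pi.1 (hderiv t ht).2 k⟩, hode, hspecial μ⟩
end

section
/- Consensus reduction in the decentralized ADMM circuit. Let R, L > 0 and let e, x_j, x_l, i_{jl}, i_{lj}: [0,∞) → ℝ^m be curves with i_{jl} and i_{lj} differentiable, such that for all t ≥ 0: i_{jl}(t) + i_{lj}(t) = −(1/R)( 2 e(t) − x_j(t) − x_l(t) ), (d/dt) i_{jl}(t) = (1/L)( e(t) − x_j(t) ), and (d/dt) i_{lj}(t) = (1/L)( e(t) − x_l(t) ), with initialization i_{jl}(0) + i_{lj}(0) = 0. Then i_{jl}(t) + i_{lj}(t) = 0 and e(t) = ½ ( x_j(t) + x_l(t) ) for all t ≥ 0. -/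
/-!
By Kirchhoff's law the net inductor voltage at the edge node is proportional to the total current
`s = i_{jl} + i_{lj}`, so adding the two inductor relations gives the linear equation
`s' = -(R / L) s`. As `s` vanishes initially, Grönwall's inequality makes it vanish forever, and
Kirchhoff's law then forces `2 e - x_j - x_l = 0`.
-/

section NormedSpace

open Set

variable {E : Type*} [NormedAddCommGroup E] [NormedSpace ℝ E]

theorem eq_zero_of_hasDerivWithinAt_Ici_of_norm_deriv_le {f f' : ℝ → E} {K a : ℝ}
    (hf : ∀ t ≥ a, HasDerivWithinAt f (f' t) (Ici a) t) (ha : f a = 0)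
    (bound : ∀ t ≥ a, ‖f' t‖ ≤ K * ‖f t‖) : ∀ t ≥ a, f t = 0 := by
  intro t ht
  have hcont : ContinuousOn f (Icc a t) := fun s hs =>
    (hf s hs.1).continuousWithinAt.mono Icc_subset_Ici_self
  exact eq_zero_of_abs_deriv_le_mul_abs_self_of_eq_zero_right hcont
    (fun s hs => (hf s hs.1).mono (Ici_subset_Ici.2 hs.1)) ha (fun s hs => bound s hs.1)
    t (right_mem_Icc.2 ht)

/-- `G` is the conductance `1 / R` and `Γ` the reciprocal inductance `1 / L`. -/
theorem dadmm_consensus_reduction_general {G Γ t₀ : ℝ} (hG : G ≠ 0) {e xj xl ijl ilj : ℝ → E}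
    (hKCL : ∀ t ≥ t₀, ijl t + ilj t = -G • ((2 : ℝ) • e t - xj t - xl t))
    (hdjl : ∀ t ≥ t₀, HasDerivWithinAt ijl (Γ • (e t - xj t)) (Ici t₀) t)
    (hdlj : ∀ t ≥ t₀, HasDerivWithinAt ilj (Γ • (e t - xl t)) (Ici t₀) t)
    (hinit : ijl t₀ + ilj t₀ = 0) :
    ∀ t ≥ t₀, ijl t + ilj t = 0 ∧ e t = (1 / 2 : ℝ) • (xj t + xl t) := by
  have hvoltage : ∀ t ≥ t₀, (2 : ℝ) • e t - xj t - xl t = (-G)⁻¹ • (ijl t + ilj t) :=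
    fun t ht => (eq_inv_smul_iff₀ (neg_ne_zero.2 hG)).2 (hKCL t ht).symm
  have hderiv : ∀ t ≥ t₀,
      HasDerivWithinAt (ijl + ilj) ((Γ * (-G)⁻¹) • (ijl + ilj) t) (Ici t₀) t := by
    intro t ht
    refine ((hdjl t ht).add (hdlj t ht)).congr_deriv ?_
    calc Γ • (e t - xj t) + Γ • (e t - xl t)
        = Γ • ((2 : ℝ) • e t - xj t - xl t) := by module
      _ = (Γ * (-G)⁻¹) • (ijl + ilj) t := by rw [hvoltage t ht, smul_smul, Pi.add_apply]
  have hcurrent : ∀ t ≥ t₀, ijl t + ilj t = 0 :=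
    eq_zero_of_hasDerivWithinAt_Ici_of_norm_deriv_le hderiv hinit fun _ _ => norm_smul_le _ _
  intro t ht
  have hnode : (2 : ℝ) • e t - xj t - xl t = 0 := by rw [hvoltage t ht, hcurrent t ht, smul_zero]
  refine ⟨hcurrent t ht, ?_⟩
  calc e t = (1 / 2 : ℝ) • ((2 : ℝ) • e t - xj t - xl t) + (1 / 2 : ℝ) • (xj t + xl t) := by module
    _ = (1 / 2 : ℝ) • (xj t + xl t) := by rw [hnode, smul_zero, zero_add]

end NormedSpace

/-- **Consensus reduction in the decentralized ADMM circuit.**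
With two resistors of resistance `R` and two inductors of inductance `L` meeting
at the edge node `e`, Kirchhoff's current law at `e` and the inductor V-I
relations, together with the initialization `i_{jl}(0) + i_{lj}(0) = 0`, imply
`i_{jl}(t) + i_{lj}(t) = 0` and `e(t) = ½(x_j(t) + x_l(t))` for all `t ≥ 0`. -/
theorem dadmm_consensus_reduction {m : ℕ} (R L : ℝ) (hR : 0 < R) (hL : 0 < L)
    (e xj xl ijl ilj : ℝ → Fin m → ℝ)
    (hKCL : ∀ t ≥ (0 : ℝ), ∀ k,
      ijl t k + ilj t k = -(1 / R) * (2 * e t k - xj t k - xl t k))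
    (hdjl : ∀ t ≥ (0 : ℝ), ∀ k,
      HasDerivWithinAt (fun s => ijl s k) ((1 / L) * (e t k - xj t k)) (Set.Ici 0) t)
    (hdlj : ∀ t ≥ (0 : ℝ), ∀ k,
      HasDerivWithinAt (fun s => ilj s k) ((1 / L) * (e t k - xl t k)) (Set.Ici 0) t)
    (hinit : ∀ k, ijl 0 k + ilj 0 k = 0) :
    ∀ t ≥ (0 : ℝ), (∀ k, ijl t k + ilj t k = 0) ∧
      (∀ k, e t k = (1 / 2) * (xj t k + xl t k)) := by
  have h (k : Fin m) := dadmm_consensus_reduction_general (one_div_pos.2 hR).ne'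
    (hKCL · · k) (hdjl · · k) (hdlj · · k) (hinit k)
  exact fun t ht => ⟨fun k => (h k t ht).1, fun k => (h k t ht).2⟩
end
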